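/- Let m ≥ 1 be an integer. There exist ε > 0 and C > 0 such that the following holds. For l = a, b let z_l : (0,∞) → ℂ be locally absolutely continuous with ‖z_l‖_X ≤ ε, and define v_l : (0,∞) → S² by v_l(r) = ((1+γ_l)h₁ − h₃ z_{l,2}, z_{l,1}, (1+γ_l)h₃ + h₁ z_{l,2})(r), where γ_l = (1 − |z_l|²)^{1/2} − 1. Let e_l : [0,∞) → ℝ³ be the solution of the ODE e_l'(r) = −(v_l'(r)·e_l(r)) v_l(r) with e_l(0) = ĵ = (0,1,0). Then ‖v_a − v_b‖_X + ‖e_a − e_b‖_{L^∞(0,∞)} ≤ C ‖z_a − z_b‖_X. -/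

import Mathlib

open MeasureTheory Set Real Filter
open scoped ENNReal

noncomputable section

abbrev V3 := Fin 3 → ℝ
abbrev V2 := Fin 2 → ℝ

/-- cross product in ℝ³ -/
def cross3 (a b : V3) : V3 :=
  ![a 1 * b 2 - a 2 * b 1, a 2 * b 0 - a 0 * b 2, a 0 * b 1 - a 1 * b 0]

/-- dot product in ℝ³ -/
def dot3 (a b : V3) : ℝ := a 0 * b 0 + a 1 * b 1 + a 2 * b 2

/-- squared euclidean norm in ℝ³ -/
def nsq3 (a : V3) : ℝ := a 0 ^ 2 + a 1 ^ 2 + a 2 ^ 2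

/-- the generator R of rotations about the x₃-axis -/
def Rv (a : V3) : V3 := ![-a 1, a 0, 0]

/-- the rotation e^{αR} about the x₃-axis -/
def rotZ (α : ℝ) (a : V3) : V3 :=
  ![Real.cos α * a 0 - Real.sin α * a 1, Real.sin α * a 0 + Real.cos α * a 1, a 2]

def kHat : V3 := ![0, 0, 1]
def negkHat : V3 := ![0, 0, -1]
def jHat : V3 := ![0, 1, 0]

/-- first component of the harmonic map profile -/
def h1f (m : ℕ) (r : ℝ) : ℝ := 2 / (r ^ (m : ℤ) + r ^ (-(m : ℤ)))

/-- third component of the harmonic map profile -/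
def h3f (m : ℕ) (r : ℝ) : ℝ := (r ^ (m : ℤ) - r ^ (-(m : ℤ))) / (r ^ (m : ℤ) + r ^ (-(m : ℤ)))

/-- the harmonic map profile h -/
def hProf (m : ℕ) (r : ℝ) : V3 := ![h1f m r, 0, h3f m r]

/-- the r-derivative of the harmonic map profile -/
def dhProf (m : ℕ) (r : ℝ) : V3 :=
  ![-((m : ℝ) / r) * h1f m r * h3f m r, 0, ((m : ℝ) / r) * (h1f m r) ^ 2]

/-- profile of the harmonic map e^{(mθ+α)R} h(r/s) -/
def harmP (m : ℕ) (s α : ℝ) (r : ℝ) : V3 := rotZ α (hProf m (r / s))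

/-- its r-derivative -/
def dharmP (m : ℕ) (s α : ℝ) (r : ℝ) : V3 := fun i => (1 / s) * rotZ α (dhProf m (r / s)) i

/-- `v` is locally absolutely continuous on (0,∞), with a.e. derivative `dv`. -/
def LocAC (v dv : ℝ → V3) : Prop :=
  (∀ a b : ℝ, 0 < a → a ≤ b → ∀ i, IntervalIntegrable (fun r => dv r i) volume a b) ∧
  (∀ a b : ℝ, 0 < a → a ≤ b → ∀ i, v b i - v a i = ∫ r in a..b, dv r i)

/-- energy density (w.r.t. dr) of the m-equivariant map with profile (v,dv) -/
def eDen (m : ℕ) (v dv : ℝ → V3) (r : ℝ) : ℝ :=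
  (nsq3 (dv r) + ((m : ℝ) ^ 2 / r ^ 2) * ((v r 0) ^ 2 + (v r 1) ^ 2)) * r

/-- the energy E(u) = (1/2)∫|∇u|² of the m-equivariant map with profile (v,dv) -/
def energy (m : ℕ) (v dv : ℝ → V3) : ℝ := π * ∫ r in Ioi (0:ℝ), eDen m v dv r

/-- membership in the class Σ_m, expressed in terms of the profile (v,dv) -/
def InSigma (m : ℕ) (v dv : ℝ → V3) : Prop :=
  LocAC v dv ∧ (∀ r ∈ Ioi (0:ℝ), nsq3 (v r) = 1) ∧
  IntegrableOn (eDen m v dv) (Ioi (0:ℝ)) ∧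
  Tendsto v (nhdsWithin 0 (Ioi 0)) (nhds negkHat) ∧
  Tendsto v atTop (nhds kHat)

/-- squared Ḣ¹(ℝ²) distance between the m-equivariant maps with profiles (v,dv), (w,dw) -/
def dH1sq (m : ℕ) (v dv w dw : ℝ → V3) : ℝ :=
  2 * π * ∫ r in Ioi (0:ℝ),
    (nsq3 (fun i => dv r i - dw r i)
      + ((m : ℝ) ^ 2 / r ^ 2) * ((v r 0 - w r 0) ^ 2 + (v r 1 - w r 1) ^ 2)) * r

/-- Ḣ¹(ℝ²) distance -/
def dH1 (m : ℕ) (v dv w dw : ℝ → V3) : ℝ := Real.sqrt (dH1sq m v dv w dw)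

/-- the polar angle of a point of ℝ² -/
def angleOf (x : V2) : ℝ := Complex.arg ⟨x 0, x 1⟩

/-- the radius of a point of ℝ² -/
def radOf (x : V2) : ℝ := Real.sqrt ((x 0) ^ 2 + (x 1) ^ 2)

/-- the m-equivariant map u(r,θ) = e^{mθR} v(r) -/
def eqMap (m : ℕ) (v : ℝ → V3) (x : V2) : V3 := rotZ ((m : ℝ) * angleOf x) (v (radOf x))

/-- the spatial gradient ∂_j u of the m-equivariant map with profile (v,dv) -/
def eqGrad (m : ℕ) (v dv : ℝ → V3) (x : V2) (j : Fin 2) : V3 :=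
  rotZ ((m : ℝ) * angleOf x) (fun i =>
    (x j / radOf x) * dv (radOf x) i
      + ((m : ℝ) * (if j = 0 then -(x 1) else x 0) / radOf x ^ 2) * Rv (v (radOf x)) i)

/-- weak (distributional) form of the Schrödinger map equation ∂ₜu = u × Δu on the time
interval I, for the m-equivariant map with time-dependent profile (v,dv):
∫∫ { u·φ_t - Σ_j (u × ∂_j u)·∂_j φ } dx dt = 0 for all C¹ compactly supported φ. -/
def WeakSM (m : ℕ) (I : Set ℝ) (v dv : ℝ → ℝ → V3) : Prop :=
  ∀ φ : ℝ → V2 → V3,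
    (∀ i, ContDiff ℝ 1 (fun q : ℝ × V2 => φ q.1 q.2 i)) →
    (∀ i, HasCompactSupport (fun q : ℝ × V2 => φ q.1 q.2 i)) →
    (∀ t, t ∉ interior I → ∀ x, φ t x = 0) →
    (∫ t in I, ∫ x : V2,
      (dot3 (eqMap m (v t) x) (fun i => deriv (fun τ => φ τ x i) t)
        - ∑ j : Fin 2, dot3 (cross3 (eqMap m (v t) x) (eqGrad m (v t) (dv t) x j))
            (fun i => fderiv ℝ (fun y => φ t y i) x (Pi.single j 1)))) = 0

/-- continuity in t of the map t ↦ u(t) with respect to the Ḣ¹ distance, on I -/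
def H1Cont (m : ℕ) (I : Set ℝ) (v dv : ℝ → ℝ → V3) : Prop :=
  ∀ t₀ ∈ I, ∀ ε > (0:ℝ), ∃ η > (0:ℝ), ∀ t ∈ I, |t - t₀| < η →
    dH1 m (v t) (dv t) (v t₀) (dv t₀) < ε

/-- a weak solution of the Schrödinger map equation in the class C(I; Σ_m), with
initial profile v₀ -/
def SolClass (m : ℕ) (I : Set ℝ) (v dv : ℝ → ℝ → V3) (v₀ : ℝ → V3) : Prop :=
  (∀ r ∈ Ioi (0:ℝ), v 0 r = v₀ r) ∧ WeakSM m I v dv ∧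
  (∀ t ∈ I, InSigma m (v t) (dv t)) ∧ H1Cont m I v dv

/-- the profile of Δu for the m-equivariant map u with profile (v,dv,ddv):
Δu = e^{mθR}( v_rr + v_r/r + (m²/r²) R² v ) -/
def lapP (m : ℕ) (v dv ddv : ℝ → V3) (r : ℝ) : V3 := fun i =>
  ddv r i + dv r i / r + ((m : ℝ) ^ 2 / r ^ 2) * (![-(v r 0), -(v r 1), 0] : V3) i

/-- squared Ḣ² distance (via the Laplacian) -/
def dH2sq (m : ℕ) (v dv ddv w dw ddw : ℝ → V3) : ℝ :=
  2 * π * ∫ r in Ioi (0:ℝ), nsq3 (fun i => lapP m v dv ddv r i - lapP m w dw ddw r i) * r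


/-- `z` is locally absolutely continuous on (0,∞), with a.e. derivative `dz`. -/
def LocACC (z dz : ℝ → ℂ) : Prop :=
  (∀ a b : ℝ, 0 < a → a ≤ b → IntervalIntegrable dz volume a b) ∧
  (∀ a b : ℝ, 0 < a → a ≤ b → z b - z a = ∫ ρ in a..b, dz ρ)

/-- the density (w.r.t. dρ) of the squared X-norm: (|z'|² + |z|²/ρ²) ρ -/
def xDen (z dz : ℝ → ℂ) (ρ : ℝ) : ℝ := (‖dz ρ‖ ^ 2 + ‖z ρ‖ ^ 2 / ρ ^ 2) * ρ

/-- the X-norm ‖z‖_X = (∫ (|z'|² + |z|²/ρ²) ρ dρ)^{1/2} -/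
def normX (z dz : ℝ → ℂ) : ℝ := Real.sqrt (∫ ρ in Ioi (0:ℝ), xDen z dz ρ)

/-- the operator L₀ = ∂_ρ + (m/ρ) h₃(ρ) -/
def L0op (m : ℕ) (z dz : ℝ → ℂ) (ρ : ℝ) : ℂ :=
  dz ρ + ((((m : ℝ) / ρ) * h3f m ρ : ℝ) : ℂ) * z ρ

/-- γ = (1 − |z|²)^{1/2} − 1 -/
def gamC (z : ℝ → ℂ) (ρ : ℝ) : ℝ := Real.sqrt (1 - ‖z ρ‖ ^ 2) - 1

/-- the map v determined by z:
v = ((1+γ)h₁ − h₃ z₂, z₁, (1+γ)h₃ + h₁ z₂) -/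
def vOf (m : ℕ) (z : ℝ → ℂ) (r : ℝ) : V3 :=
  ![(1 + gamC z r) * h1f m r - h3f m r * (z r).im,
    (z r).re,
    (1 + gamC z r) * h3f m r + h1f m r * (z r).im]

/-- the density of the squared X-norm for ℝ³-valued functions -/
def xDenV (v dv : ℝ → V3) (r : ℝ) : ℝ := (nsq3 (dv r) + nsq3 (v r) / r ^ 2) * r

/-!
In the orthonormal frame `(ĵ, h × ĵ, h)` the map `v` has plane component `z` and height
`(1 - |z|²)^(1/2)`. The transported vector `e` stays orthogonal to `v`, so its component along `h`
is determined by its plane component `ζ ∈ ℂ`, and the transport equation reduces to an equation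
`ζ' = F(κ, z, z', ζ)`, `ζ(0) = 1`, where `κ = m h₁ / r` is the speed of `h`, and `F` is a sum of
products, each of which contains a factor `z`, paired with a factor `z'` or `κ`. Since `z / r`,
`z'` and `κ` all lie in `L²(r dr)`, Cauchy–Schwarz gives
`sup |δζ| ≤ C ‖δz‖_X + C ε sup |δζ|`, and the last term is absorbed for small `ε`.
The derivative of `v` has plane component `z' + κ (1 - |z|²)^(1/2) i`, which gives the bound on
`δv` directly.
-/

open scoped Topology

section LocalPrimitive

variable {E F : Type*} [NormedAddCommGroup E] [NormedSpace ℝ E] [NormedAddCommGroup F]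
  [NormedSpace ℝ F]

/-- `f` is locally absolutely continuous on `(0, ∞)` with derivative `f'`, in the form of the
fundamental theorem of calculus on compact subintervals. -/
structure IsLocPrimitive (f f' : ℝ → E) : Prop where
  intervalIntegrable : ∀ a b : ℝ, 0 < a → a ≤ b → IntervalIntegrable f' volume a b
  sub_eq_integral : ∀ a b : ℝ, 0 < a → a ≤ b → f b - f a = ∫ r in a..b, f' r

namespace IsLocPrimitive

variable {f f' g g' : ℝ → E} {G : ℝ → ℝ} {a b : ℝ} {l : E}

lemma congr (hf : IsLocPrimitive f f') (hfg : EqOn f g (Ioi 0)) (hfg' : EqOn f' g' (Ioi 0)) :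
    IsLocPrimitive g g' := by
  have hsub {a b : ℝ} (ha : 0 < a) : Ioc a b ⊆ Ioi 0 := fun x hx => ha.trans hx.1
  refine ⟨fun a b ha hab => (hf.intervalIntegrable a b ha hab).congr ?_, fun a b ha hab => ?_⟩
  · rw [uIoc_of_le hab]
    exact hfg'.mono (hsub ha)
  · rw [← hfg ha, ← hfg (ha.trans_le hab), hf.sub_eq_integral a b ha hab]
    exact intervalIntegral.integral_congr_ae_restrict <| by
      rw [uIoc_of_le hab]
      exact (ae_restrict_mem measurableSet_Ioc).mono fun r hr => hfg' (hsub ha hr)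

lemma add (hf : IsLocPrimitive f f') (hg : IsLocPrimitive g g') :
    IsLocPrimitive (fun r => f r + g r) (fun r => f' r + g' r) := by
  refine ⟨fun a b ha hab => (hf.1 a b ha hab).add (hg.1 a b ha hab), fun a b ha hab => ?_⟩
  rw [intervalIntegral.integral_add (hf.1 a b ha hab) (hg.1 a b ha hab), ← hf.2 a b ha hab,
    ← hg.2 a b ha hab]
  abel

lemma neg (hf : IsLocPrimitive f f') : IsLocPrimitive (fun r => -f r) (fun r => -f' r) := by
  refine ⟨fun a b ha hab => (hf.1 a b ha hab).neg, fun a b ha hab => ?_⟩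
  rw [intervalIntegral.integral_neg, ← hf.2 a b ha hab]
  abel

lemma sub (hf : IsLocPrimitive f f') (hg : IsLocPrimitive g g') :
    IsLocPrimitive (fun r => f r - g r) (fun r => f' r - g' r) := by
  simpa only [sub_eq_add_neg] using hf.add hg.neg

lemma clm_comp [CompleteSpace E] [CompleteSpace F] (L : E →L[ℝ] F) (hf : IsLocPrimitive f f') :
    IsLocPrimitive (fun r => L (f r)) (fun r => L (f' r)) := by
  refine ⟨fun a b ha hab => ?_, fun a b ha hab => ?_⟩
  · exact ⟨L.integrable_comp (hf.1 a b ha hab).1, L.integrable_comp (hf.1 a b ha hab).2⟩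
  · rw [L.intervalIntegral_comp_comm (hf.1 a b ha hab), ← hf.2 a b ha hab, map_sub]

lemma aestronglyMeasurable (hf : IsLocPrimitive f f') :
    AEStronglyMeasurable f' (volume.restrict (Ioi 0)) := by
  refine LocallyIntegrableOn.aestronglyMeasurable fun r (hr : 0 < r) => ?_
  refine ⟨Ioc (r / 2) (2 * r), mem_nhdsWithin_of_mem_nhds
    (Ioc_mem_nhds (half_lt_self hr) (by linarith)), ?_⟩
  exact (hf.1 (r / 2) (2 * r) (half_pos hr) (by linarith)).1

lemma continuousOn (hf : IsLocPrimitive f f') : ContinuousOn f (Ioi 0) := by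
  intro r (hr : 0 < r)
  have hle : r / 2 ≤ 2 * r := by linarith
  have h := intervalIntegral.continuousOn_primitive_interval'
    (hf.1 (r / 2) (2 * r) (half_pos hr) hle) left_mem_uIcc
  rw [uIcc_of_le hle] at h
  have h' : ContinuousOn f (Icc (r / 2) (2 * r)) := by
    refine (h.const_add (f (r / 2))).congr fun x hx => ?_
    simp only [← hf.2 _ x (half_pos hr) hx.1, add_sub_cancel]
  exact (h'.continuousAt (Icc_mem_nhds (half_lt_self hr) (by linarith))).continuousWithinAt

lemma of_hasDerivAt [CompleteSpace E] (h : ∀ r : ℝ, 0 < r → HasDerivAt f (f' r) r)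
    (hf' : ContinuousOn f' (Ioi 0)) : IsLocPrimitive f f' := by
  have hsub {a b : ℝ} (ha : 0 < a) (hab : a ≤ b) : uIcc a b ⊆ Ioi 0 := fun x hx =>
    ha.trans_le (uIcc_of_le hab ▸ hx).1
  have hint (a b : ℝ) (ha : 0 < a) (hab : a ≤ b) : IntervalIntegrable f' volume a b :=
    (hf'.mono (hsub ha hab)).intervalIntegrable
  exact ⟨hint, fun a b ha hab => (intervalIntegral.integral_eq_sub_of_hasDerivAt
    (fun x hx => h x (hsub ha hab hx)) (hint a b ha hab)).symm⟩

lemma ae_hasDerivAt [CompleteSpace E] (hf : IsLocPrimitive f f') :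
    ∀ᵐ r ∂volume.restrict (Ioi 0), HasDerivAt f (f' r) r := by
  rw [ae_restrict_iff' measurableSet_Ioi]
  refine measure_null_of_locally_null _ fun r hr => ?_
  have hr : 0 < r := (Classical.not_imp.1 hr).1
  have hle : r / 2 ≤ 2 * r := by linarith
  refine ⟨{x | ¬ (x ∈ Ioo (r / 2) (2 * r) → HasDerivAt f (f' x) x)}, ?_, ?_⟩
  · filter_upwards [self_mem_nhdsWithin, mem_nhdsWithin_of_mem_nhds
      (Ioo_mem_nhds (half_lt_self hr) (by linarith : r < 2 * r))] with x hx hx'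
    exact fun h => hx fun _ => h hx'
  · change ∀ᵐ x, x ∈ Ioo (r / 2) (2 * r) → HasDerivAt f (f' x) x
    filter_upwards [(hf.1 _ _ (half_pos hr) hle).ae_hasDerivAt_integral] with x hx hmem
    have hd := hx (by rw [uIcc_of_le hle]; exact Ioo_subset_Icc_self hmem) _ left_mem_uIcc
    refine (hd.const_add (f (r / 2))).congr_of_eventuallyEq ?_
    filter_upwards [Ioo_mem_nhds hmem.1 hmem.2] with y hy
    rw [← hf.2 _ y (half_pos hr) hy.1.le, add_sub_cancel]

lemma ae_eq_of_eqOn [CompleteSpace E] (hf : IsLocPrimitive f f') (hg : IsLocPrimitive g g')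
    (hfg : EqOn f g (Ioi 0)) : f' =ᵐ[volume.restrict (Ioi 0)] g' := by
  filter_upwards [hf.ae_hasDerivAt, hg.ae_hasDerivAt, ae_restrict_mem measurableSet_Ioi]
    with r hfr hgr hr
  exact hfr.unique (hgr.congr_of_eventuallyEq (hfg.eventuallyEq_of_mem (Ioi_mem_nhds hr)))

lemma norm_sub_le (hf : IsLocPrimitive f f') (ha : 0 < a) (hab : a ≤ b)
    (hG : IntegrableOn G (Ioc 0 b)) (hbd : ∀ᵐ r ∂volume.restrict (Ioc 0 b), ‖f' r‖ ≤ G r) :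
    ‖f b - f a‖ ≤ ∫ r in Ioc 0 b, G r := by
  have hsub : Ioc a b ⊆ Ioc 0 b := Ioc_subset_Ioc_left ha.le
  rw [hf.2 a b ha hab, intervalIntegral.integral_of_le hab]
  calc ‖∫ r in Ioc a b, f' r‖ ≤ ∫ r in Ioc a b, G r :=
        norm_integral_le_of_norm_le (hG.mono_set hsub)
          (ae_restrict_of_ae_restrict_of_subset hsub hbd)
    _ ≤ ∫ r in Ioc 0 b, G r :=
        setIntegral_mono_set hG (hbd.mono fun _ h => (norm_nonneg _).trans h) hsub.eventuallyLE

lemma norm_sub_le_of_mapClusterPt (hf : IsLocPrimitive f f') (hl : MapClusterPt l (𝓝[>] 0) f)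
    (hb : 0 < b) (hG : IntegrableOn G (Ioc 0 b))
    (hbd : ∀ᵐ r ∂volume.restrict (Ioc 0 b), ‖f' r‖ ≤ G r) :
    ‖f b - l‖ ≤ ∫ r in Ioc 0 b, G r := by
  have hclosed : IsClosed {y : E | ‖f b - y‖ ≤ ∫ r in Ioc 0 b, G r} :=
    isClosed_le (by fun_prop) continuous_const
  refine hclosed.mem_of_mapClusterPt hl ?_
  filter_upwards [Ioc_mem_nhdsGT hb] with a ha
  exact hf.norm_sub_le ha.1 ha.2 hG hbd

lemma norm_sub_le_of_tendsto (hf : IsLocPrimitive f f') (hl : Tendsto f (𝓝[>] 0) (𝓝 l))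
    (hb : 0 < b) (hG : IntegrableOn G (Ioi 0))
    (hbd : ∀ᵐ r ∂volume.restrict (Ioi 0), ‖f' r‖ ≤ G r) :
    ‖f b - l‖ ≤ ∫ r in Ioi 0, G r :=
  (hf.norm_sub_le_of_mapClusterPt hl.mapClusterPt hb (hG.mono_set Ioc_subset_Ioi_self)
    (ae_restrict_of_ae_restrict_of_subset Ioc_subset_Ioi_self hbd)).trans <|
  setIntegral_mono_set hG (hbd.mono fun _ h => (norm_nonneg _).trans h)
    Ioc_subset_Ioi_self.eventuallyLE

lemma eq_of_tendsto (hf : IsLocPrimitive f f') (hl : Tendsto f (𝓝[>] 0) (𝓝 l))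
    (h0 : f' =ᵐ[volume.restrict (Ioi 0)] 0) (hb : 0 < b) : f b = l := by
  have h := hf.norm_sub_le_of_tendsto (G := 0) hl hb integrableOn_zero
    (h0.mono fun _ hr => by simp [hr])
  simpa [sub_eq_zero] using h

lemma absolutelyContinuousOnInterval {f f' : ℝ → ℝ} (hf : IsLocPrimitive f f') (ha : 0 < a)
    (hab : a ≤ b) : AbsolutelyContinuousOnInterval f a b := by
  have h := (hf.1 a b ha hab).absolutelyContinuousOnInterval_intervalIntegral left_mem_uIcc
  refine Tendsto.congr' ?_ h
  filter_upwards [mem_inf_of_right (mem_principal_self _)] with S hS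
  refine Finset.sum_congr rfl fun i hi => ?_
  obtain ⟨h₁, h₂⟩ := hS.1 i hi
  rw [uIcc_of_le hab] at h₁ h₂
  rw [← hf.2 a _ ha h₁.1, ← hf.2 a _ ha h₂.1, dist_sub_right]

lemma mul {f f' g g' : ℝ → ℝ} (hf : IsLocPrimitive f f') (hg : IsLocPrimitive g g') :
    IsLocPrimitive (fun r => f r * g r) (fun r => f' r * g r + f r * g' r) := by
  have hsub {a b : ℝ} (ha : 0 < a) (hab : a ≤ b) : uIcc a b ⊆ Ioi 0 := fun x hx =>
    ha.trans_le (uIcc_of_le hab ▸ hx).1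
  refine ⟨fun a b ha hab => ?_, fun a b ha hab => ?_⟩
  · exact ((hf.1 a b ha hab).mul_continuousOn (hg.continuousOn.mono (hsub ha hab))).add
      ((hg.1 a b ha hab).continuousOn_mul (hf.continuousOn.mono (hsub ha hab)))
  · rw [← (hf.absolutelyContinuousOnInterval ha hab).integral_deriv_mul_eq_sub
      (hg.absolutelyContinuousOnInterval ha hab)]
    refine intervalIntegral.integral_congr_ae_restrict ?_
    rw [uIoc_of_le hab]
    have hs : Ioc a b ⊆ Ioi 0 := fun x hx => ha.trans hx.1
    filter_upwards [ae_restrict_of_ae_restrict_of_subset hs hf.ae_hasDerivAt,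
      ae_restrict_of_ae_restrict_of_subset hs hg.ae_hasDerivAt] with r hfr hgr
    rw [hfr.deriv, hgr.deriv]

end IsLocPrimitive

end LocalPrimitive

section Components

lemma LocAC.isLocPrimitive {v dv : ℝ → V3} (h : LocAC v dv) (i : Fin 3) :
    IsLocPrimitive (fun r => v r i) (fun r => dv r i) :=
  ⟨fun a b ha hab => h.1 a b ha hab i, fun a b ha hab => h.2 a b ha hab i⟩

lemma LocAC.isLocPrimitive_dot3 {v dv w dw : ℝ → V3} (hv : LocAC v dv) (hw : LocAC w dw) :
    IsLocPrimitive (fun r => dot3 (v r) (w r))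
      (fun r => dot3 (dv r) (w r) + dot3 (v r) (dw r)) := by
  have h (i : Fin 3) := (hv.isLocPrimitive i).mul (hw.isLocPrimitive i)
  refine (((h 0).add (h 1)).add (h 2)).congr (fun r _ => rfl) fun r _ => ?_
  simp only [dot3]
  ring

lemma LocACC.isLocPrimitive {z dz : ℝ → ℂ} (h : LocACC z dz) : IsLocPrimitive z dz :=
  ⟨h.1, h.2⟩

lemma IsLocPrimitive.complexMk {x x' y y' : ℝ → ℝ} (hx : IsLocPrimitive x x')
    (hy : IsLocPrimitive y y') :
    IsLocPrimitive (fun r => (⟨x r, y r⟩ : ℂ)) (fun r => ⟨x' r, y' r⟩) := by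
  refine ((hx.clm_comp Complex.ofRealCLM).add
    (hy.clm_comp (Complex.I • Complex.ofRealCLM))).congr (fun r _ => ?_) fun r _ => ?_ <;>
  simp [Complex.ext_iff]

lemma IsLocPrimitive.norm_sq {z dz : ℝ → ℂ} (h : IsLocPrimitive z dz) :
    IsLocPrimitive (fun r => ‖z r‖ ^ 2) (fun r => 2 * inner ℝ (z r) (dz r)) := by
  have hre := h.clm_comp Complex.reCLM
  have him := h.clm_comp Complex.imCLM
  refine ((hre.mul hre).add (him.mul him)).congr (fun r _ => ?_) fun r _ => ?_
  · simp only [Complex.reCLM_apply, Complex.imCLM_apply, Complex.sq_norm, Complex.normSq_apply]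
  · simp only [Complex.reCLM_apply, Complex.imCLM_apply, Complex.inner, Complex.mul_re,
      Complex.conj_re, Complex.conj_im]
    ring

end Components

section Profile

variable {m : ℕ} {r : ℝ}

/-- The angular speed `m h₁ / r` at which the profile `h` moves along its great circle. -/
def profSpeed (m : ℕ) (r : ℝ) : ℝ := (m : ℝ) / r * h1f m r

lemma h1f_eq (hr : 0 < r) : h1f m r = 2 * r ^ m / ((r ^ m) ^ 2 + 1) := by
  have : 0 < r ^ m := pow_pos hr m
  rw [h1f, zpow_neg, zpow_natCast]
  field_simp

lemma h3f_eq (hr : 0 < r) : h3f m r = ((r ^ m) ^ 2 - 1) / ((r ^ m) ^ 2 + 1) := by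
  have : 0 < r ^ m := pow_pos hr m
  rw [h3f, zpow_neg, zpow_natCast]
  field_simp

lemma h1f_sq_add_h3f_sq (hr : 0 < r) : h1f m r ^ 2 + h3f m r ^ 2 = 1 := by
  rw [h1f_eq hr, h3f_eq hr]
  have : 0 < r ^ m := pow_pos hr m
  field_simp
  ring

lemma profSpeed_nonneg (hr : 0 < r) : 0 ≤ profSpeed m r := by
  rw [profSpeed, h1f_eq hr]
  positivity

lemma hasDerivAt_pow_eq_div_mul (hr : r ≠ 0) :
    HasDerivAt (fun x : ℝ => x ^ m) ((m : ℝ) / r * r ^ m) r := by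
  refine (hasDerivAt_pow m r).congr_deriv ?_
  rcases m with _ | k
  · simp
  · field_simp
    simp [pow_succ]

lemma hasDerivAt_h1f (hr : 0 < r) : HasDerivAt (h1f m) (-(profSpeed m r * h3f m r)) r := by
  have : 0 < r ^ m := pow_pos hr m
  have hd := hasDerivAt_pow_eq_div_mul (m := m) hr.ne'
  have h : HasDerivAt (h1f m) _ r :=
    ((hd.const_mul 2).div ((hd.fun_pow 2).add_const 1) (by positivity)).congr_of_eventuallyEq
      (mem_of_superset (Ioi_mem_nhds hr) fun _ => h1f_eq)
  convert h using 1
  rw [profSpeed, h1f_eq hr, h3f_eq hr]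
  field_simp
  ring

lemma hasDerivAt_h3f (hr : 0 < r) : HasDerivAt (h3f m) (profSpeed m r * h1f m r) r := by
  have : 0 < r ^ m := pow_pos hr m
  have hd := hasDerivAt_pow_eq_div_mul (m := m) hr.ne'
  have h : HasDerivAt (h3f m) _ r :=
    (((hd.fun_pow 2).sub_const 1).div ((hd.fun_pow 2).add_const 1)
      (by positivity)).congr_of_eventuallyEq
      (mem_of_superset (Ioi_mem_nhds hr) fun _ => h3f_eq)
  convert h using 1
  rw [profSpeed, h1f_eq hr]
  field_simp
  ring

lemma continuousOn_h1f : ContinuousOn (h1f m) (Ioi 0) := fun _ hr =>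
  (hasDerivAt_h1f hr).continuousAt.continuousWithinAt

lemma continuousOn_h3f : ContinuousOn (h3f m) (Ioi 0) := fun _ hr =>
  (hasDerivAt_h3f hr).continuousAt.continuousWithinAt

lemma continuousOn_profSpeed : ContinuousOn (profSpeed m) (Ioi 0) :=
  (continuousOn_const.div continuousOn_id fun _ hr => ne_of_gt hr).mul continuousOn_h1f

lemma isLocPrimitive_h1f : IsLocPrimitive (h1f m) (fun r => -(profSpeed m r * h3f m r)) :=
  .of_hasDerivAt (fun _ hr => hasDerivAt_h1f hr) (continuousOn_profSpeed.mul continuousOn_h3f).neg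

lemma isLocPrimitive_h3f : IsLocPrimitive (h3f m) (fun r => profSpeed m r * h1f m r) :=
  .of_hasDerivAt (fun _ hr => hasDerivAt_h3f hr) (continuousOn_profSpeed.mul continuousOn_h1f)

/-- The continuous extension of `h₃` to `r = 0`, where `h3f` takes the junk value `0 / 0 = 0`. -/
def h3Ext (m : ℕ) (r : ℝ) : ℝ := ((r ^ m) ^ 2 - 1) / ((r ^ m) ^ 2 + 1)

lemma hasDerivAt_mul_h3Ext (hr : 0 < r) :
    HasDerivAt (fun x => m * h3Ext m x) (profSpeed m r ^ 2 * r) r := by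
  have h : HasDerivAt (h3Ext m) _ r := (hasDerivAt_h3f hr).congr_of_eventuallyEq
    (mem_of_superset (Ioi_mem_nhds hr) fun _ hx => (h3f_eq hx).symm)
  refine (h.const_mul (m : ℝ)).congr_deriv ?_
  unfold profSpeed
  field_simp

lemma continuous_h3Ext : Continuous (h3Ext m) :=
  Continuous.div (by fun_prop) (by fun_prop) fun x => by positivity

lemma h3Ext_zero (hm : m ≠ 0) : h3Ext m 0 = -1 := by
  simp [h3Ext, hm]

lemma tendsto_h3Ext_atTop (hm : m ≠ 0) : Tendsto (h3Ext m) atTop (𝓝 1) := by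
  have hpow : Tendsto (fun x : ℝ => (x ^ m) ^ 2 + 1) atTop atTop :=
    tendsto_atTop_add_const_right _ _
      ((tendsto_pow_atTop two_ne_zero).comp (tendsto_pow_atTop hm))
  have h : Tendsto (fun x : ℝ => 1 - 2 * ((x ^ m) ^ 2 + 1)⁻¹) atTop (𝓝 (1 - 2 * 0)) :=
    (hpow.inv_tendsto_atTop.const_mul 2).const_sub 1
  rw [mul_zero, sub_zero] at h
  refine h.congr fun r => ?_
  rw [h3Ext]
  field_simp
  ring

lemma integrableOn_profSpeed_sq_mul (hm : m ≠ 0) :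
    IntegrableOn (fun r => profSpeed m r ^ 2 * r) (Ioi 0) :=
  integrableOn_Ioi_deriv_of_nonneg (continuous_h3Ext.const_mul _).continuousWithinAt
    (fun _ => hasDerivAt_mul_h3Ext) (fun _ hr => mul_nonneg (sq_nonneg _) (le_of_lt hr))
    ((tendsto_h3Ext_atTop hm).const_mul _)

lemma integral_profSpeed_sq_mul (hm : m ≠ 0) :
    ∫ r in Ioi 0, profSpeed m r ^ 2 * r = 2 * m := by
  rw [integral_Ioi_of_hasDerivAt_of_tendsto (continuous_h3Ext.const_mul _).continuousWithinAt
    (fun _ => hasDerivAt_mul_h3Ext) (integrableOn_profSpeed_sq_mul hm)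
    ((tendsto_h3Ext_atTop hm).const_mul _), h3Ext_zero hm]
  ring

end Profile

section XNorm

variable {z dz w dw : ℝ → ℂ} {r : ℝ}

lemma xDen_nonneg (hr : 0 < r) : 0 ≤ xDen z dz r := by
  unfold xDen
  positivity

lemma ae_xDen_nonneg : ∀ᵐ r ∂volume.restrict (Ioi 0), 0 ≤ xDen z dz r :=
  (ae_restrict_mem measurableSet_Ioi).mono fun _ => xDen_nonneg

lemma normX_nonneg : 0 ≤ normX z dz := Real.sqrt_nonneg _

lemma integral_xDen_eq : ∫ r in Ioi 0, xDen z dz r = normX z dz ^ 2 :=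
  (Real.sq_sqrt (integral_nonneg_of_ae ae_xDen_nonneg)).symm

lemma norm_le_sqrt_mul_xDen (hr : 0 < r) : ‖z r‖ ≤ √(r * xDen z dz r) := by
  refine Real.le_sqrt_of_sq_le ?_
  have h : r * xDen z dz r = (‖dz r‖ * r) ^ 2 + ‖z r‖ ^ 2 := by
    unfold xDen
    field_simp
  nlinarith [sq_nonneg (‖dz r‖ * r)]

lemma norm_deriv_le_sqrt_xDen_div (hr : 0 < r) : ‖dz r‖ ≤ √(xDen z dz r / r) := by
  refine Real.le_sqrt_of_sq_le ?_
  have h : xDen z dz r / r = ‖dz r‖ ^ 2 + (‖z r‖ / r) ^ 2 := by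
    unfold xDen
    field_simp
  nlinarith [sq_nonneg (‖z r‖ / r)]

lemma abs_two_mul_inner_le_xDen (hr : 0 < r) : |2 * inner ℝ (z r) (dz r)| ≤ xDen z dz r := by
  have h : xDen z dz r = (‖dz r‖ * r - ‖z r‖) ^ 2 / r + 2 * (‖z r‖ * ‖dz r‖) := by
    unfold xDen
    field_simp
    ring
  rw [abs_mul, abs_two, h]
  have := abs_real_inner_le_norm (z r) (dz r)
  have : 0 ≤ (‖dz r‖ * r - ‖z r‖) ^ 2 / r := by positivity
  linarith

-- A function bounded away from `0` near `r = 0` has `xDen` at least a multiple of `1 / r` there.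
lemma mapClusterPt_zero_of_integrableOn_xDen (iz : IntegrableOn (xDen z dz) (Ioi 0)) :
    MapClusterPt 0 (𝓝[>] 0) z := by
  rw [Metric.nhds_basis_ball.mapClusterPt_iff_frequently]
  intro η hη
  by_contra hcon
  obtain ⟨δ, hδ, hsub⟩ := mem_nhdsGT_iff_exists_Ioo_subset.1 (not_frequently.1 hcon)
  have hinv : IntegrableOn (fun r : ℝ => r⁻¹) (Ioo 0 δ) := by
    refine Integrable.mono' ((iz.mono_set Ioo_subset_Ioi_self).const_mul (1 / η ^ 2))
      measurable_inv.aestronglyMeasurable ?_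
    filter_upwards [ae_restrict_mem measurableSet_Ioo] with r hr
    have hr0 : 0 < r := hr.1
    have hz : η ≤ ‖z r‖ := by simpa using hsub hr
    rw [Real.norm_of_nonneg (by positivity)]
    calc r⁻¹ = 1 / η ^ 2 * ((0 + η ^ 2 / r ^ 2) * r) := by field_simp; ring
      _ ≤ 1 / η ^ 2 * xDen z dz r := by
        unfold xDen
        gcongr
        positivity
  have h := (intervalIntegrable_iff_integrableOn_Ioo_of_le (le_of_lt hδ)).2 hinv
  rcases intervalIntegrable_inv_iff.1 h with h | h
  exacts [ne_of_lt hδ h, h left_mem_uIcc]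

namespace IsLocPrimitive

lemma sq_norm_le_integral_xDen (h : IsLocPrimitive z dz) (iz : IntegrableOn (xDen z dz) (Ioi 0))
    (hr : 0 < r) : ‖z r‖ ^ 2 ≤ ∫ ρ in Ioc 0 r, xDen z dz ρ := by
  have hcl : MapClusterPt (‖(0 : ℂ)‖ ^ 2) (𝓝[>] 0) fun ρ => ‖z ρ‖ ^ 2 :=
    MapClusterPt.continuousAt_comp (f := fun x : ℂ => ‖x‖ ^ 2) (by fun_prop)
      (mapClusterPt_zero_of_integrableOn_xDen iz)
  have hb := h.norm_sq.norm_sub_le_of_mapClusterPt hcl hr (iz.mono_set Ioc_subset_Ioi_self)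
    ((ae_restrict_mem measurableSet_Ioc).mono fun ρ hρ => abs_two_mul_inner_le_xDen hρ.1)
  simpa using hb

lemma norm_le_normX (h : IsLocPrimitive z dz) (iz : IntegrableOn (xDen z dz) (Ioi 0))
    (hr : 0 < r) : ‖z r‖ ≤ normX z dz :=
  Real.le_sqrt_of_sq_le <| (h.sq_norm_le_integral_xDen iz hr).trans <|
    setIntegral_mono_set iz ae_xDen_nonneg Ioc_subset_Ioi_self.eventuallyLE

lemma tendsto_zero_of_integrableOn_xDen (h : IsLocPrimitive z dz)
    (iz : IntegrableOn (xDen z dz) (Ioi 0)) : Tendsto z (𝓝[>] 0) (𝓝 0) := by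
  have hint : Tendsto (fun r => ∫ ρ in Ioc 0 r, xDen z dz ρ) (𝓝[>] 0) (𝓝 0) := by
    have hc := intervalIntegral.continuousOn_primitive_interval' (a := 0) (b₁ := 0) (b₂ := 1)
      (f := xDen z dz) (μ := volume) ((intervalIntegrable_iff_integrableOn_Ioc_of_le zero_le_one).2
        (iz.mono_set Ioc_subset_Ioi_self)) left_mem_uIcc
    have h0 := (hc 0 left_mem_uIcc).tendsto
    rw [intervalIntegral.integral_same, uIcc_of_le zero_le_one] at h0
    refine (h0.mono_left (nhdsWithin_le_iff.2 (Icc_mem_nhdsGT one_pos))).congr' ?_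
    exact eventually_mem_nhdsWithin.mono fun r hr =>
      intervalIntegral.integral_of_le (le_of_lt hr)
  have hsq : Tendsto (fun r => ‖z r‖ ^ 2) (𝓝[>] 0) (𝓝 0) :=
    squeeze_zero' (Eventually.of_forall fun r => sq_nonneg _)
      (eventually_mem_nhdsWithin.mono fun r hr => h.sq_norm_le_integral_xDen iz hr) hint
  rw [tendsto_zero_iff_norm_tendsto_zero]
  simpa using hsq.sqrt

lemma aestronglyMeasurable_xDen (h : IsLocPrimitive z dz) :
    AEStronglyMeasurable (xDen z dz) (volume.restrict (Ioi 0)) := by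
  have hdz := h.aestronglyMeasurable.aemeasurable
  have hz := (h.continuousOn.aestronglyMeasurable (μ := volume) measurableSet_Ioi).aemeasurable
  unfold xDen
  fun_prop

lemma integrableOn_xDen_sub (hz : IsLocPrimitive z dz) (hw : IsLocPrimitive w dw)
    (iz : IntegrableOn (xDen z dz) (Ioi 0)) (iw : IntegrableOn (xDen w dw) (Ioi 0)) :
    IntegrableOn (xDen (fun r => z r - w r) (fun r => dz r - dw r)) (Ioi 0) := by
  refine Integrable.mono' ((iz.add iw).const_mul 2) (hz.sub hw).aestronglyMeasurable_xDen ?_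
  filter_upwards [ae_restrict_mem measurableSet_Ioi] with r (hr : 0 < r)
  have hsq (a b : ℂ) : ‖a - b‖ ^ 2 ≤ 2 * (‖a‖ ^ 2 + ‖b‖ ^ 2) := by
    nlinarith [_root_.norm_sub_le a b, norm_nonneg (a - b), sq_nonneg (‖a‖ - ‖b‖)]
  rw [Real.norm_of_nonneg (xDen_nonneg hr)]
  calc (‖dz r - dw r‖ ^ 2 + ‖z r - w r‖ ^ 2 / r ^ 2) * r
      ≤ (2 * (‖dz r‖ ^ 2 + ‖dw r‖ ^ 2) + 2 * (‖z r‖ ^ 2 + ‖w r‖ ^ 2) / r ^ 2) * r := by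
        gcongr <;> exact hsq _ _
    _ = 2 * (xDen z dz r + xDen w dw r) := by
        unfold xDen
        ring

end IsLocPrimitive

end XNorm

section CauchySchwarz

variable {α : Type*} [MeasurableSpace α] {μ : Measure α} {f g : α → ℝ}

lemma memLp_two_sqrt (hf : Integrable f μ) (hf0 : 0 ≤ᵐ[μ] f) : MemLp (fun x => √(f x)) 2 μ := by
  rw [memLp_two_iff_integrable_sq
    (Real.continuous_sqrt.comp_aestronglyMeasurable hf.aestronglyMeasurable)]
  exact hf.congr (hf0.mono fun x hx => (Real.sq_sqrt hx).symm)

lemma integrable_sqrt_mul_sqrt (hf : Integrable f μ) (hg : Integrable g μ) (hf0 : 0 ≤ᵐ[μ] f)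
    (hg0 : 0 ≤ᵐ[μ] g) : Integrable (fun x => √(f x) * √(g x)) μ :=
  (memLp_two_sqrt hf hf0).integrable_mul (memLp_two_sqrt hg hg0)

lemma integral_sqrt_mul_sqrt_le (hf : Integrable f μ) (hg : Integrable g μ) (hf0 : 0 ≤ᵐ[μ] f)
    (hg0 : 0 ≤ᵐ[μ] g) :
    ∫ x, √(f x) * √(g x) ∂μ ≤ √(∫ x, f x ∂μ) * √(∫ x, g x ∂μ) := by
  have hsq {f : α → ℝ} (hf0 : 0 ≤ᵐ[μ] f) : ∫ x, √(f x) ^ (2 : ℝ) ∂μ = ∫ x, f x ∂μ :=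
    integral_congr_ae (hf0.mono fun x hx => by simp [Real.sq_sqrt hx])
  have h := integral_mul_le_Lp_mul_Lq_of_nonneg Real.HolderConjugate.two_two
    (Eventually.of_forall fun x => Real.sqrt_nonneg (f x))
    (Eventually.of_forall fun x => Real.sqrt_nonneg (g x))
    (by simpa using memLp_two_sqrt hf hf0) (by simpa using memLp_two_sqrt hg hg0)
  rwa [hsq hf0, hsq hg0, ← Real.sqrt_eq_rpow, ← Real.sqrt_eq_rpow] at h

end CauchySchwarz

section FrameComponents

variable {m : ℕ} {r : ℝ} {a b : V3} {z : ℝ → ℂ}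

/-- The components of `a` along the orthonormal pair `ĵ`, `h × ĵ = (-h₃, 0, h₁)` spanning the
plane orthogonal to the profile `h`, as the real and imaginary parts of a complex number. -/
def planeComp (m : ℕ) (r : ℝ) (a : V3) : ℂ := ⟨a 1, h1f m r * a 2 - h3f m r * a 0⟩

/-- The component of `a` along the profile `h = (h₁, 0, h₃)`. -/
def profComp (m : ℕ) (r : ℝ) (a : V3) : ℝ := h1f m r * a 0 + h3f m r * a 2

/-- The `h`-component `1 + γ` of the point of the sphere with plane component `z`. -/
def sphereHeight (z : ℂ) : ℝ := √(1 - ‖z‖ ^ 2)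

/-- The `h`-component of the vector with plane component `ζ` that is tangent to the sphere at the
point with plane component `z`. -/
def tangentHeight (z ζ : ℂ) : ℝ := -((sphereHeight z)⁻¹ * inner ℝ z ζ)

lemma dot3_eq_inner_planeComp_add (hr : 0 < r) :
    dot3 a b = inner ℝ (planeComp m r a) (planeComp m r b) + profComp m r a * profComp m r b := by
  simp only [dot3, planeComp, profComp, Complex.inner, Complex.mul_re, Complex.conj_re,
    Complex.conj_im]
  linear_combination -(a 0 * b 0 + a 2 * b 2) * h1f_sq_add_h3f_sq (m := m) hr

lemma dot3_self : dot3 a a = nsq3 a := by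
  simp only [dot3, nsq3]
  ring

lemma nsq3_eq_sq_norm_planeComp_add (hr : 0 < r) :
    nsq3 a = ‖planeComp m r a‖ ^ 2 + profComp m r a ^ 2 := by
  rw [← dot3_self, dot3_eq_inner_planeComp_add (m := m) hr, real_inner_self_eq_norm_sq,
    sq (profComp m r a)]

lemma norm_planeComp_le (hr : 0 < r) : ‖planeComp m r a‖ ≤ √(nsq3 a) := by
  rw [nsq3_eq_sq_norm_planeComp_add (m := m) hr]
  exact Real.le_sqrt_of_sq_le (le_add_of_nonneg_right (sq_nonneg _))

lemma abs_profComp_le (hr : 0 < r) : |profComp m r a| ≤ √(nsq3 a) := by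
  rw [nsq3_eq_sq_norm_planeComp_add (m := m) hr]
  exact Real.abs_le_sqrt (le_add_of_nonneg_left (sq_nonneg _))

lemma sqrt_nsq3_le (hr : 0 < r) : √(nsq3 a) ≤ ‖planeComp m r a‖ + |profComp m r a| := by
  rw [nsq3_eq_sq_norm_planeComp_add (m := m) hr, ← sq_abs (profComp m r a)]
  exact Real.sqrt_le_left (by positivity) |>.mpr (by
    nlinarith [norm_nonneg (planeComp m r a), abs_nonneg (profComp m r a)])

lemma planeComp_sub :
    planeComp m r (fun i => a i - b i) = planeComp m r a - planeComp m r b := by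
  simp only [planeComp, Complex.ext_iff, Complex.sub_re, Complex.sub_im, true_and]
  ring

lemma profComp_sub :
    profComp m r (fun i => a i - b i) = profComp m r a - profComp m r b := by
  simp only [profComp]
  ring

lemma planeComp_smul (c : ℝ) : planeComp m r (fun i => c * a i) = c • planeComp m r a := by
  simp only [planeComp, Complex.ext_iff, Complex.smul_re, Complex.smul_im, smul_eq_mul, true_and]
  ring

lemma sphereHeight_le_one (z : ℂ) : sphereHeight z ≤ 1 :=
  Real.sqrt_le_one.2 (by linarith [sq_nonneg ‖z‖])

lemma half_le_sphereHeight {z : ℂ} (hz : ‖z‖ ≤ 1 / 2) : 1 / 2 ≤ sphereHeight z :=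
  Real.le_sqrt_of_sq_le (by nlinarith [norm_nonneg z])

lemma planeComp_vOf (hr : 0 < r) : planeComp m r (vOf m z r) = z r := by
  refine Complex.ext rfl ?_
  simp only [planeComp, vOf, Matrix.cons_val]
  linear_combination (z r).im * h1f_sq_add_h3f_sq (m := m) hr

lemma profComp_vOf (hr : 0 < r) : profComp m r (vOf m z r) = sphereHeight (z r) := by
  simp only [profComp, vOf, gamC, sphereHeight, Matrix.cons_val, add_sub_cancel]
  linear_combination √(1 - ‖z r‖ ^ 2) * h1f_sq_add_h3f_sq (m := m) hr

lemma nsq3_vOf (hr : 0 < r) (hz : ‖z r‖ ≤ 1) : nsq3 (vOf m z r) = 1 := by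
  rw [nsq3_eq_sq_norm_planeComp_add (m := m) hr, planeComp_vOf hr, profComp_vOf hr, sphereHeight,
    Real.sq_sqrt (by nlinarith [norm_nonneg (z r)])]
  ring

lemma profComp_eq_tangentHeight (hr : 0 < r) (hz : sphereHeight (z r) ≠ 0)
    (ha : dot3 (vOf m z r) a = 0) : profComp m r a = tangentHeight (z r) (planeComp m r a) := by
  rw [dot3_eq_inner_planeComp_add (m := m) hr, planeComp_vOf hr, profComp_vOf hr] at ha
  rw [tangentHeight]
  field_simp
  linarith

lemma LocAC.isLocPrimitive_planeComp {v dv : ℝ → V3} (h : LocAC v dv) :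
    IsLocPrimitive (fun r => planeComp m r (v r)) (fun r => planeComp m r (dv r)
      - (profSpeed m r * profComp m r (v r)) • Complex.I) := by
  refine ((h.isLocPrimitive 1).complexMk ((isLocPrimitive_h1f.mul (h.isLocPrimitive 2)).sub
    (isLocPrimitive_h3f.mul (h.isLocPrimitive 0)))).congr (fun r _ => rfl) fun r _ => ?_
  simp only [planeComp, profComp, Complex.ext_iff, Complex.sub_re, Complex.sub_im,
    Complex.smul_re, Complex.smul_im, Complex.I_re, Complex.I_im, smul_eq_mul]
  constructor <;> ring

lemma tendsto_sqrt_nsq3_sub {e : ℝ → V3} (he : ∀ i, Tendsto (fun r => e r i) (𝓝[>] 0) (𝓝 (a i))) :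
    Tendsto (fun r => √(nsq3 fun i => e r i - a i)) (𝓝[>] 0) (𝓝 0) := by
  have hd (i : Fin 3) : Tendsto (fun r => (e r i - a i) ^ 2) (𝓝[>] 0) (𝓝 0) := by
    simpa using ((he i).sub_const (a i)).pow 2
  simpa [nsq3] using (((hd 0).add (hd 1)).add (hd 2)).sqrt

end FrameComponents

section TransportedFrame

/-- `z` has `X`-norm at most `1/2`, `dv` is the derivative of the associated map `v`, and `e` is
the vector transported along `v` from `ĵ` by `e' = -(v' · e) v`, in integrated form. -/
structure IsTransportedFrame (m : ℕ) (z dz : ℝ → ℂ) (dv e : ℝ → V3) : Prop where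
  locACC : LocACC z dz
  integrableOn_xDen : IntegrableOn (xDen z dz) (Ioi 0)
  normX_le : normX z dz ≤ 1 / 2
  locAC_vOf : LocAC (vOf m z) dv
  integrableOn_smul : ∀ r : ℝ, 0 ≤ r → ∀ i,
    IntegrableOn (fun τ => dot3 (dv τ) (e τ) * vOf m z τ i) (Icc 0 r)
  eq_sub_integral : ∀ r : ℝ, 0 ≤ r → ∀ i,
    e r i = jHat i - ∫ τ in (0 : ℝ)..r, dot3 (dv τ) (e τ) * vOf m z τ i

/-- The plane component of `v'` when `z` and `w` are the values of `z` and `z'`; the speed `κ` of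
the profile enters because the frame `ĵ, h × ĵ, h` itself rotates. -/
def planeVel (κ : ℝ) (z w : ℂ) : ℂ := w + (κ * sphereHeight z) • Complex.I

/-- The scalar product of the tangent vectors at `z` with plane components `ζ` and `ξ`. -/
def tangentInner (z ζ ξ : ℂ) : ℝ := inner ℝ ζ ξ + tangentHeight z ζ * tangentHeight z ξ

/-- The right-hand side of the equation `ζ' = planeTransport κ z z' ζ` satisfied by the plane
component `ζ` of a transported vector. -/
def planeTransport (κ : ℝ) (z w ζ : ℂ) : ℂ :=
  -(tangentInner z (planeVel κ z w) ζ • z + (κ * tangentHeight z ζ) • Complex.I)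

namespace IsTransportedFrame

variable {m : ℕ} {z dz : ℝ → ℂ} {dv e : ℝ → V3} {r : ℝ}

lemma isLocPrimitive_z (F : IsTransportedFrame m z dz dv e) : IsLocPrimitive z dz :=
  F.locACC.isLocPrimitive

lemma norm_z_le (F : IsTransportedFrame m z dz dv e) (hr : 0 < r) : ‖z r‖ ≤ 1 / 2 :=
  (F.isLocPrimitive_z.norm_le_normX F.integrableOn_xDen hr).trans F.normX_le

lemma sphereHeight_ne_zero (F : IsTransportedFrame m z dz dv e) (hr : 0 < r) :
    sphereHeight (z r) ≠ 0 := by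
  linarith [half_le_sphereHeight (F.norm_z_le hr)]

lemma nsq3_vOf_eq_one (F : IsTransportedFrame m z dz dv e) (hr : 0 < r) :
    nsq3 (vOf m z r) = 1 :=
  nsq3_vOf hr ((F.norm_z_le hr).trans (by norm_num))

lemma locAC (F : IsTransportedFrame m z dz dv e) :
    LocAC e fun r i => -(dot3 (dv r) (e r) * vOf m z r i) := by
  have hint (i : Fin 3) (r : ℝ) (hr : 0 ≤ r) :
      IntervalIntegrable (fun τ => dot3 (dv τ) (e τ) * vOf m z τ i) volume 0 r :=
    (intervalIntegrable_iff_integrableOn_Icc_of_le hr).2 (F.integrableOn_smul r hr i)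
  refine ⟨fun a b ha hab i => ?_, fun a b ha hab i => ?_⟩
  · exact ((hint i a ha.le).symm.trans (hint i b (ha.le.trans hab))).neg
  · rw [F.eq_sub_integral a ha.le i, F.eq_sub_integral b (ha.le.trans hab) i,
      intervalIntegral.integral_neg, ← intervalIntegral.integral_interval_sub_left
        (hint i b (ha.le.trans hab)) (hint i a ha.le)]
    ring

lemma tendsto_jHat (F : IsTransportedFrame m z dz dv e) (i : Fin 3) :
    Tendsto (fun r => e r i) (𝓝[>] 0) (𝓝 (jHat i)) := by
  have hint := F.integrableOn_smul 1 zero_le_one i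
  rw [← uIcc_of_le zero_le_one] at hint
  have hc := intervalIntegral.continuousOn_primitive_interval hint 0 left_mem_uIcc
  have h := hc.tendsto.const_sub (jHat i)
  rw [intervalIntegral.integral_same, sub_zero, uIcc_of_le zero_le_one] at h
  refine (h.mono_left (nhdsWithin_le_iff.2 (Icc_mem_nhdsGT one_pos))).congr' ?_
  exact eventually_mem_nhdsWithin.mono fun r hr => (F.eq_sub_integral r (le_of_lt hr) i).symm

lemma tendsto_planeComp (F : IsTransportedFrame m z dz dv e) :
    Tendsto (fun r => planeComp m r (e r)) (𝓝[>] 0) (𝓝 1) := by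
  have hj (r : ℝ) : planeComp m r jHat = 1 := by simp [planeComp, jHat, Complex.ext_iff]
  rw [tendsto_iff_norm_sub_tendsto_zero]
  refine squeeze_zero' (Eventually.of_forall fun _ => norm_nonneg _) ?_
    (tendsto_sqrt_nsq3_sub F.tendsto_jHat)
  filter_upwards [self_mem_nhdsWithin] with r hr
  rw [← hj r, ← planeComp_sub]
  exact norm_planeComp_le hr

lemma tendsto_profComp (F : IsTransportedFrame m z dz dv e) :
    Tendsto (fun r => profComp m r (e r)) (𝓝[>] 0) (𝓝 0) := by
  have hj (r : ℝ) : profComp m r jHat = 0 := by simp [profComp, jHat]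
  refine squeeze_zero_norm' ?_ (tendsto_sqrt_nsq3_sub F.tendsto_jHat)
  filter_upwards [self_mem_nhdsWithin] with r hr
  rw [← sub_zero (profComp m r (e r)), ← hj r, ← profComp_sub]
  exact abs_profComp_le hr

lemma dot3_vOf_eq_zero (F : IsTransportedFrame m z dz dv e) (hr : 0 < r) :
    dot3 (vOf m z r) (e r) = 0 := by
  refine (F.locAC_vOf.isLocPrimitive_dot3 F.locAC).eq_of_tendsto ?_ ?_ hr
  · have hz := F.isLocPrimitive_z.tendsto_zero_of_integrableOn_xDen F.integrableOn_xDen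
    have hg : Tendsto (fun r => sphereHeight (z r)) (𝓝[>] 0) (𝓝 1) := by
      simpa [sphereHeight] using ((hz.norm.pow 2).const_sub 1).sqrt
    have h := (hz.inner (𝕜 := ℝ) F.tendsto_planeComp).add (hg.mul F.tendsto_profComp)
    rw [inner_zero_left, mul_zero, add_zero] at h
    refine h.congr' (eventually_mem_nhdsWithin.mono fun r hr => ?_)
    beta_reduce
    rw [dot3_eq_inner_planeComp_add (m := m) hr, planeComp_vOf hr, profComp_vOf hr]
  · filter_upwards [ae_restrict_mem measurableSet_Ioi] with r hr
    have hv := F.nsq3_vOf_eq_one hr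
    simp only [dot3, nsq3, Pi.zero_apply] at hv ⊢
    linear_combination -(dv r 0 * e r 0 + dv r 1 * e r 1 + dv r 2 * e r 2) * hv

lemma nsq3_eq_one (F : IsTransportedFrame m z dz dv e) (hr : 0 < r) : nsq3 (e r) = 1 := by
  rw [← dot3_self]
  refine (F.locAC.isLocPrimitive_dot3 F.locAC).eq_of_tendsto ?_ ?_ hr
  · have h := (F.tendsto_planeComp.norm.pow 2).add (F.tendsto_profComp.pow 2)
    rw [norm_one, one_pow, zero_pow two_ne_zero, add_zero] at h
    refine h.congr' (eventually_mem_nhdsWithin.mono fun r hr => ?_)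
    beta_reduce
    rw [dot3_self, nsq3_eq_sq_norm_planeComp_add (m := m) hr]
  · filter_upwards [ae_restrict_mem measurableSet_Ioi] with r hr
    have he := F.dot3_vOf_eq_zero hr
    simp only [dot3, Pi.zero_apply] at he ⊢
    linear_combination -2 * (dv r 0 * e r 0 + dv r 1 * e r 1 + dv r 2 * e r 2) * he

lemma norm_planeComp_le_one (F : IsTransportedFrame m z dz dv e) (hr : 0 < r) :
    ‖planeComp m r (e r)‖ ≤ 1 := by
  simpa [F.nsq3_eq_one hr] using norm_planeComp_le (m := m) (a := e r) hr

lemma profComp_eq (F : IsTransportedFrame m z dz dv e) (hr : 0 < r) :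
    profComp m r (e r) = tangentHeight (z r) (planeComp m r (e r)) :=
  profComp_eq_tangentHeight hr (F.sphereHeight_ne_zero hr) (F.dot3_vOf_eq_zero hr)

lemma ae_planeComp_deriv_vOf (F : IsTransportedFrame m z dz dv e) :
    ∀ᵐ r ∂volume.restrict (Ioi 0),
      planeComp m r (dv r) = planeVel (profSpeed m r) (z r) (dz r) := by
  filter_upwards [F.locAC_vOf.isLocPrimitive_planeComp.ae_eq_of_eqOn F.isLocPrimitive_z
    fun r hr => planeComp_vOf hr, ae_restrict_mem measurableSet_Ioi] with r h hr
  rw [planeVel, ← h, profComp_vOf hr, sub_add_cancel]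

lemma ae_profComp_deriv_vOf (F : IsTransportedFrame m z dz dv e) :
    ∀ᵐ r ∂volume.restrict (Ioi 0), profComp m r (dv r) =
      tangentHeight (z r) (planeVel (profSpeed m r) (z r) (dz r)) := by
  have hconst : IsLocPrimitive (fun _ => (1 : ℝ)) fun _ => 0 :=
    .of_hasDerivAt (fun r _ => hasDerivAt_const r 1) continuousOn_const
  filter_upwards [(F.locAC_vOf.isLocPrimitive_dot3 F.locAC_vOf).ae_eq_of_eqOn hconst fun r hr => by
    simpa [dot3_self] using F.nsq3_vOf_eq_one hr, F.ae_planeComp_deriv_vOf,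
    ae_restrict_mem measurableSet_Ioi] with r hd hV hr
  rw [← hV]
  refine profComp_eq_tangentHeight hr (F.sphereHeight_ne_zero hr) ?_
  simp only [dot3] at hd ⊢
  linear_combination hd / 2

lemma isLocPrimitive_planeComp (F : IsTransportedFrame m z dz dv e) :
    IsLocPrimitive (fun r => planeComp m r (e r))
      (fun r => -(dot3 (dv r) (e r) • z r
        + (profSpeed m r * profComp m r (e r)) • Complex.I)) := by
  refine F.locAC.isLocPrimitive_planeComp.congr (fun r _ => rfl) fun r hr => ?_
  simp only [← neg_mul]
  rw [planeComp_smul, planeComp_vOf hr, neg_smul, neg_add, sub_eq_add_neg]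

lemma ae_planeComp_deriv (F : IsTransportedFrame m z dz dv e) :
    ∀ᵐ r ∂volume.restrict (Ioi 0),
      -(dot3 (dv r) (e r) • z r + (profSpeed m r * profComp m r (e r)) • Complex.I) =
        planeTransport (profSpeed m r) (z r) (dz r) (planeComp m r (e r)) := by
  filter_upwards [F.ae_planeComp_deriv_vOf, F.ae_profComp_deriv_vOf,
    ae_restrict_mem measurableSet_Ioi] with r hV hp hr
  rw [dot3_eq_inner_planeComp_add (m := m) hr, hV, hp, F.profComp_eq hr]
  rfl

end IsTransportedFrame

end TransportedFrame

section LipschitzEstimates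

/-- `x` and `y` both have norm at most `A` and are at distance at most `δ`: the data from which
difference estimates for products are computed. -/
structure PairBound {E : Type*} [SeminormedAddCommGroup E] (x y : E) (A δ : ℝ) : Prop where
  norm_left_le : ‖x‖ ≤ A
  norm_right_le : ‖y‖ ≤ A
  norm_sub_le : ‖x - y‖ ≤ δ

namespace PairBound

variable {E : Type*} [SeminormedAddCommGroup E] {x y x' y' : E} {c d A B δ η : ℝ}

lemma bound_nonneg (h : PairBound x y A δ) : 0 ≤ A := (norm_nonneg x).trans h.1

lemma dist_nonneg (h : PairBound x y A δ) : 0 ≤ δ := (norm_nonneg _).trans h.3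

lemma mono (h : PairBound x y A δ) (hA : A ≤ B) (hδ : δ ≤ η) : PairBound x y B η :=
  ⟨h.1.trans hA, h.2.trans hA, h.3.trans hδ⟩

lemma const (hA : ‖x‖ ≤ A) : PairBound x x A 0 := ⟨hA, hA, by simp⟩

lemma neg (h : PairBound x y A δ) : PairBound (-x) (-y) A δ :=
  ⟨by simpa using h.1, by simpa using h.2, by
    rw [neg_sub_neg, norm_sub_rev]
    exact h.3⟩

lemma add (h : PairBound x y A δ) (h' : PairBound x' y' B η) :
    PairBound (x + x') (y + y') (A + B) (δ + η) :=
  ⟨norm_add_le_of_le h.1 h'.1, norm_add_le_of_le h.2 h'.2, by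
    rw [add_sub_add_comm]
    exact norm_add_le_of_le h.3 h'.3⟩

lemma bilin {F G : Type*} [SeminormedAddCommGroup F] [NormedSpace ℝ F]
    [SeminormedAddCommGroup G] [NormedSpace ℝ E] [NormedSpace ℝ G] {u v : F}
    (L : E →L[ℝ] F →L[ℝ] G) (hL : ‖L‖ ≤ 1) (h : PairBound x y A δ)
    (h' : PairBound u v B η) : PairBound (L x u) (L y v) (A * B) (δ * B + A * η) := by
  have hle {p : E} {q : F} {a b : ℝ} (hp : ‖p‖ ≤ a) (hq : ‖q‖ ≤ b) : ‖L p q‖ ≤ a * b := by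
    simpa using L.le_of_opNorm₂_le_of_le hL hp hq
  have hsplit : L x u - L y v = L (x - y) u + L y (u - v) := by
    rw [map_sub, map_sub, sub_apply, sub_add_sub_cancel]
  exact ⟨hle h.1 h'.1, hle h.2 h'.2,
    hsplit ▸ norm_add_le_of_le (hle h.3 h'.1) (hle h.2 h'.3)⟩

lemma smul [NormedSpace ℝ E] (h : PairBound c d A δ) (h' : PairBound x y B η) :
    PairBound (c • x) (d • y) (A * B) (δ * B + A * η) :=
  h.bilin (.lsmul ℝ ℝ) ContinuousLinearMap.opNorm_lsmul_le h'

lemma inner [InnerProductSpace ℝ E] (h : PairBound x y A δ) (h' : PairBound x' y' B η) :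
    PairBound (inner ℝ x x') (inner ℝ y y') (A * B) (δ * B + A * η) :=
  h.bilin (innerSL ℝ) (norm_innerSL_le ℝ) h'

lemma inv {a : ℝ} (h : PairBound c d A δ) (ha : 0 < a) (hc : a ≤ c) (hd : a ≤ d) :
    PairBound c⁻¹ d⁻¹ a⁻¹ (δ / a ^ 2) := by
  have hc0 := ha.trans_le hc
  have hd0 := ha.trans_le hd
  have hle {x : ℝ} (hx : a ≤ x) : ‖x⁻¹‖ ≤ a⁻¹ := by
    rw [Real.norm_of_nonneg (inv_nonneg.2 (ha.le.trans hx))]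
    exact inv_anti₀ ha hx
  refine ⟨hle hc, hle hd, ?_⟩
  have hsplit : c⁻¹ - d⁻¹ = (d - c) / (c * d) := by field_simp
  rw [hsplit, norm_div, norm_sub_rev, Real.norm_of_nonneg (mul_pos hc0 hd0).le, sq]
  exact div_le_div₀ h.dist_nonneg h.3 (by positivity) (mul_le_mul hc hd ha.le hc0.le)

end PairBound

variable {κ Z W D δ η A : ℝ} {z z' w w' ζ ζ' ξ ξ' : ℂ}

lemma pairBound_sphereHeight (hz : PairBound z z' (1 / 2) δ) :
    PairBound (sphereHeight z) (sphereHeight z') 1 δ := by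
  have hle (u : ℂ) : ‖sphereHeight u‖ ≤ 1 := by
    rw [Real.norm_of_nonneg (by exact Real.sqrt_nonneg _)]
    exact sphereHeight_le_one u
  have hsq {u : ℂ} (hu : ‖u‖ ≤ 1 / 2) : sphereHeight u ^ 2 = 1 - ‖u‖ ^ 2 :=
    Real.sq_sqrt (by nlinarith [norm_nonneg u])
  refine ⟨hle z, hle z', ?_⟩
  have hg := half_le_sphereHeight hz.1
  have hg' := half_le_sphereHeight hz.2
  have hfactor : |sphereHeight z - sphereHeight z'| * (sphereHeight z + sphereHeight z') =
      |‖z'‖ - ‖z‖| * (‖z'‖ + ‖z‖) := by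
    rw [← abs_of_pos (by linarith : 0 < sphereHeight z + sphereHeight z'), ← abs_mul,
      ← abs_of_nonneg (by positivity : 0 ≤ ‖z'‖ + ‖z‖), ← abs_mul]
    congr 1
    linear_combination hsq hz.1 - hsq hz.2
  have hdist : |‖z'‖ - ‖z‖| ≤ δ := by
    rw [abs_sub_comm]
    exact (abs_norm_sub_norm_le z z').trans hz.3
  rw [Real.norm_eq_abs]
  nlinarith [hz.1, hz.2, abs_nonneg (sphereHeight z - sphereHeight z'), abs_nonneg (‖z'‖ - ‖z‖)]

lemma pairBound_tangentHeight (hz : PairBound z z' Z δ) (hZ : Z ≤ 1 / 2)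
    (hζ : PairBound ζ ζ' A D) :
    PairBound (tangentHeight z ζ) (tangentHeight z' ζ') (2 * Z * A) (4 * A * δ + 2 * Z * D) := by
  have hg : PairBound (sphereHeight z)⁻¹ (sphereHeight z')⁻¹ 2 (4 * δ) :=
    ((pairBound_sphereHeight (hz.mono hZ le_rfl)).inv one_half_pos
      (half_le_sphereHeight (hz.1.trans hZ)) (half_le_sphereHeight (hz.2.trans hZ))).mono
      (by norm_num) (by ring_nf; rfl)
  refine (hg.smul (hz.inner hζ)).neg.mono (by linarith) ?_
  have hZA : Z * (A * δ) ≤ 1 / 2 * (A * δ) :=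
    mul_le_mul_of_nonneg_right hZ (mul_nonneg hζ.bound_nonneg hz.dist_nonneg)
  linarith

lemma pairBound_planeVel (hκ0 : 0 ≤ κ) (hκ : κ ≤ W) (hz : PairBound z z' (1 / 2) δ)
    (hw : PairBound w w' W η) :
    PairBound (planeVel κ z w) (planeVel κ z' w') (2 * W) (η + W * δ) := by
  have hκ' : ‖κ‖ ≤ W := by rwa [Real.norm_of_nonneg hκ0]
  have hI : PairBound Complex.I Complex.I 1 0 := .const Complex.norm_I.le
  refine (hw.add ((((PairBound.const hκ').smul (pairBound_sphereHeight hz)).smul hI))).mono ?_ ?_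
  all_goals linarith

lemma pairBound_tangentHeight_planeVel (hκ0 : 0 ≤ κ) (hκ : κ ≤ W) (hZ : Z ≤ 1 / 2)
    (hz : PairBound z z' Z δ) (hw : PairBound w w' W η) :
    PairBound (tangentHeight z (planeVel κ z w)) (tangentHeight z' (planeVel κ z' w'))
      (4 * Z * W) (9 * W * δ + η) := by
  have hV := pairBound_planeVel hκ0 hκ (hz.mono hZ le_rfl) hw
  refine (pairBound_tangentHeight hz hZ hV).mono (by linarith) ?_
  nlinarith [mul_nonneg hw.bound_nonneg hz.dist_nonneg, hw.dist_nonneg]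

lemma pairBound_tangentInner (hκ0 : 0 ≤ κ) (hκ : κ ≤ W) (hZ : Z ≤ 1 / 2)
    (hz : PairBound z z' Z δ) (hw : PairBound w w' W η) (hζ : PairBound ζ ζ' 1 D) :
    PairBound (tangentInner z (planeVel κ z w) ζ) (tangentInner z' (planeVel κ z' w') ζ')
      (4 * W) (18 * W * δ + 4 * W * D + 2 * η) := by
  have hV := pairBound_planeVel hκ0 hκ (hz.mono hZ le_rfl) hw
  have hp := pairBound_tangentHeight_planeVel hκ0 hκ hZ hz hw
  have hq := pairBound_tangentHeight hz hZ hζ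
  have hW := hw.bound_nonneg
  have hδ := hz.dist_nonneg
  have hη := hw.dist_nonneg
  have hD := hζ.dist_nonneg
  have hZ0 := hz.bound_nonneg
  have hZZ : Z * Z ≤ 1 / 4 := by nlinarith
  refine ((hV.inner hζ).add (hp.smul hq)).mono ?_ ?_
  · nlinarith [mul_le_mul_of_nonneg_right hZZ hW]
  · nlinarith [mul_le_mul_of_nonneg_right hZZ (mul_nonneg hW hD),
      mul_le_mul_of_nonneg_right hZ (mul_nonneg hW hδ), mul_le_mul_of_nonneg_right hZ hη]

lemma norm_planeTransport_sub_le (hκ0 : 0 ≤ κ) (hκ : κ ≤ W) (hZ : Z ≤ 1 / 2)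
    (hz : PairBound z z' Z δ) (hw : PairBound w w' W η) (hζ : PairBound ζ ζ' 1 D) :
    ‖planeTransport κ z w ζ - planeTransport κ z' w' ζ'‖ ≤
      17 * W * δ + 6 * W * Z * D + 2 * Z * η := by
  have hκ' : ‖κ‖ ≤ W := by rwa [Real.norm_of_nonneg hκ0]
  have hI : PairBound Complex.I Complex.I 1 0 := .const Complex.norm_I.le
  have hS := (pairBound_tangentInner hκ0 hκ hZ hz hw hζ).smul hz
  have hq := ((PairBound.const hκ').smul (pairBound_tangentHeight hz hZ hζ)).smul hI
  refine (hS.add hq).neg.norm_sub_le.trans ?_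
  nlinarith [mul_le_mul_of_nonneg_right hZ (mul_nonneg hw.bound_nonneg hz.dist_nonneg),
    mul_le_mul_of_nonneg_right hZ
      (mul_nonneg (mul_nonneg hw.bound_nonneg hz.bound_nonneg) hζ.dist_nonneg)]

end LipschitzEstimates

section DifferenceEstimates

/-- The sum of the `X`-densities of two functions. -/
def pairDen (z₁ dz₁ z₂ dz₂ : ℝ → ℂ) (r : ℝ) : ℝ := xDen z₁ dz₁ r + xDen z₂ dz₂ r

/-- The density controlling all coefficients of the difference equation: `|z₁'|²`, `|z₂'|²` and
the squared speed of the profile, with weight `r`. -/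
def coeffDen (m : ℕ) (z₁ dz₁ z₂ dz₂ : ℝ → ℂ) (r : ℝ) : ℝ :=
  pairDen z₁ dz₁ z₂ dz₂ r + profSpeed m r ^ 2 * r

variable {m : ℕ} {z₁ dz₁ z₂ dz₂ : ℝ → ℂ} {dv₁ e₁ dv₂ e₂ : ℝ → V3} {r ε K : ℝ}

lemma sqrt_div_mul_sqrt_mul (hr : 0 < r) (a b : ℝ) : √(a / r) * √(r * b) = √a * √b := by
  rw [Real.sqrt_div' _ hr.le, Real.sqrt_mul hr.le]
  field_simp

lemma le_two_mul_of_forall_le_half_add {ι : Type*} {f : ι → ℝ} {B : ℝ} (hf : BddAbove (range f))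
    (h : ∀ K, (∀ i, f i ≤ K) → ∀ i, f i ≤ K / 2 + B) (i : ι) : f i ≤ 2 * B := by
  have : Nonempty ι := ⟨i⟩
  have hsup : ⨆ j, f j ≤ (⨆ j, f j) / 2 + B := ciSup_le (h _ (le_ciSup hf))
  linarith [le_ciSup hf i]

lemma pairDen_nonneg (hr : 0 < r) : 0 ≤ pairDen z₁ dz₁ z₂ dz₂ r :=
  add_nonneg (xDen_nonneg hr) (xDen_nonneg hr)

lemma pairDen_le_coeffDen (hr : 0 < r) : pairDen z₁ dz₁ z₂ dz₂ r ≤ coeffDen m z₁ dz₁ z₂ dz₂ r :=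
  le_add_of_nonneg_right (by positivity)

lemma profSpeed_le (hr : 0 < r) : profSpeed m r ≤ √(coeffDen m z₁ dz₁ z₂ dz₂ r / r) := by
  refine Real.le_sqrt_of_sq_le ((le_div_iff₀ hr).2 ?_)
  exact le_add_of_nonneg_left (pairDen_nonneg hr)

lemma pairBound_deriv (hr : 0 < r) {η : ℝ} (hη : ‖dz₁ r - dz₂ r‖ ≤ η) :
    PairBound (dz₁ r) (dz₂ r) √(coeffDen m z₁ dz₁ z₂ dz₂ r / r) η := by
  have h := pairDen_le_coeffDen (m := m) (z₁ := z₁) (dz₁ := dz₁) (z₂ := z₂) (dz₂ := dz₂) hr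
  refine ⟨(norm_deriv_le_sqrt_xDen_div (z := z₁) hr).trans ?_,
    (norm_deriv_le_sqrt_xDen_div (z := z₂) hr).trans ?_, hη⟩ <;> gcongr
  · exact (le_add_of_nonneg_right (xDen_nonneg hr)).trans h
  · exact (le_add_of_nonneg_left (xDen_nonneg hr)).trans h

namespace IsTransportedFrame

lemma pairBound_z (F₁ : IsTransportedFrame m z₁ dz₁ dv₁ e₁)
    (F₂ : IsTransportedFrame m z₂ dz₂ dv₂ e₂) (hr : 0 < r) {δ : ℝ} (hδ : ‖z₁ r - z₂ r‖ ≤ δ) :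
    PairBound (z₁ r) (z₂ r) (1 / 2 ⊓ √(r * pairDen z₁ dz₁ z₂ dz₂ r)) δ := by
  refine ⟨le_inf (F₁.norm_z_le hr) ((norm_le_sqrt_mul_xDen (dz := dz₁) hr).trans ?_),
    le_inf (F₂.norm_z_le hr) ((norm_le_sqrt_mul_xDen (dz := dz₂) hr).trans ?_), hδ⟩ <;> gcongr
  · exact le_add_of_nonneg_right (xDen_nonneg hr)
  · exact le_add_of_nonneg_left (xDen_nonneg hr)

lemma norm_planeTransport_sub_le (F₁ : IsTransportedFrame m z₁ dz₁ dv₁ e₁)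
    (F₂ : IsTransportedFrame m z₂ dz₂ dv₂ e₂) (hr : 0 < r)
    (hK : ‖planeComp m r (e₁ r) - planeComp m r (e₂ r)‖ ≤ K) :
    ‖planeTransport (profSpeed m r) (z₁ r) (dz₁ r) (planeComp m r (e₁ r)) -
        planeTransport (profSpeed m r) (z₂ r) (dz₂ r) (planeComp m r (e₂ r))‖ ≤
      19 * (√(coeffDen m z₁ dz₁ z₂ dz₂ r) * √(xDen (z₁ - z₂) (dz₁ - dz₂) r)) +
        6 * K * (√(coeffDen m z₁ dz₁ z₂ dz₂ r) * √(pairDen z₁ dz₁ z₂ dz₂ r)) := by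
  set T := coeffDen m z₁ dz₁ z₂ dz₂ r
  set U := pairDen z₁ dz₁ z₂ dz₂ r
  set X := xDen (z₁ - z₂) (dz₁ - dz₂) r
  have hK0 : 0 ≤ K := (norm_nonneg _).trans hK
  have hUT : √U ≤ √T := Real.sqrt_le_sqrt (pairDen_le_coeffDen hr)
  have hκ : profSpeed m r ≤ √(T / r) := profSpeed_le hr
  have hz : PairBound (z₁ r) (z₂ r) (1 / 2 ⊓ √(r * U)) √(r * X) :=
    F₁.pairBound_z F₂ hr (norm_le_sqrt_mul_xDen (z := z₁ - z₂) hr)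
  have hdz : PairBound (dz₁ r) (dz₂ r) √(T / r) √(X / r) :=
    pairBound_deriv hr (norm_deriv_le_sqrt_xDen_div (dz := dz₁ - dz₂) hr)
  have h := _root_.norm_planeTransport_sub_le (profSpeed_nonneg hr) hκ inf_le_left hz hdz
    ⟨F₁.norm_planeComp_le_one hr, F₂.norm_planeComp_le_one hr, hK⟩
  calc _ ≤ 17 * √(T / r) * √(r * X) + 6 * √(T / r) * (1 / 2 ⊓ √(r * U)) * K
        + 2 * (1 / 2 ⊓ √(r * U)) * √(X / r) := h
    _ ≤ 17 * √(T / r) * √(r * X) + 6 * √(T / r) * √(r * U) * K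
        + 2 * √(r * U) * √(X / r) := by gcongr <;> exact inf_le_right
    _ = 17 * (√T * √X) + 6 * K * (√T * √U) + 2 * (√U * √X) := by
        linear_combination 17 * sqrt_div_mul_sqrt_mul hr T X
          + 6 * K * sqrt_div_mul_sqrt_mul hr T U + 2 * sqrt_div_mul_sqrt_mul hr X U
    _ ≤ 17 * (√T * √X) + 6 * K * (√T * √U) + 2 * (√T * √X) := by gcongr
    _ = _ := by ring

lemma integrableOn_pairDen (F₁ : IsTransportedFrame m z₁ dz₁ dv₁ e₁)
    (F₂ : IsTransportedFrame m z₂ dz₂ dv₂ e₂) :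
    IntegrableOn (pairDen z₁ dz₁ z₂ dz₂) (Ioi 0) :=
  F₁.integrableOn_xDen.add F₂.integrableOn_xDen

lemma integrableOn_coeffDen (F₁ : IsTransportedFrame m z₁ dz₁ dv₁ e₁)
    (F₂ : IsTransportedFrame m z₂ dz₂ dv₂ e₂) (hm : m ≠ 0) :
    IntegrableOn (coeffDen m z₁ dz₁ z₂ dz₂) (Ioi 0) :=
  (F₁.integrableOn_pairDen F₂).add (integrableOn_profSpeed_sq_mul hm)

lemma integrableOn_xDen_sub (F₁ : IsTransportedFrame m z₁ dz₁ dv₁ e₁)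
    (F₂ : IsTransportedFrame m z₂ dz₂ dv₂ e₂) :
    IntegrableOn (xDen (z₁ - z₂) (dz₁ - dz₂)) (Ioi 0) :=
  F₁.isLocPrimitive_z.integrableOn_xDen_sub F₂.isLocPrimitive_z F₁.integrableOn_xDen
    F₂.integrableOn_xDen

lemma integral_pairDen_eq (F₁ : IsTransportedFrame m z₁ dz₁ dv₁ e₁)
    (F₂ : IsTransportedFrame m z₂ dz₂ dv₂ e₂) :
    ∫ r in Ioi 0, pairDen z₁ dz₁ z₂ dz₂ r = normX z₁ dz₁ ^ 2 + normX z₂ dz₂ ^ 2 := by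
  rw [← integral_xDen_eq, ← integral_xDen_eq]
  exact integral_add F₁.integrableOn_xDen F₂.integrableOn_xDen

lemma sqrt_integral_pairDen_le (F₁ : IsTransportedFrame m z₁ dz₁ dv₁ e₁)
    (F₂ : IsTransportedFrame m z₂ dz₂ dv₂ e₂) (h₁ : normX z₁ dz₁ ≤ ε) (h₂ : normX z₂ dz₂ ≤ ε) :
    √(∫ r in Ioi 0, pairDen z₁ dz₁ z₂ dz₂ r) ≤ 2 * ε := by
  have hn₁ : 0 ≤ normX z₁ dz₁ := normX_nonneg
  have hn₂ : 0 ≤ normX z₂ dz₂ := normX_nonneg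
  rw [F₁.integral_pairDen_eq F₂]
  exact Real.sqrt_le_left (by linarith) |>.2 (by nlinarith)

lemma integral_coeffDen_le (F₁ : IsTransportedFrame m z₁ dz₁ dv₁ e₁)
    (F₂ : IsTransportedFrame m z₂ dz₂ dv₂ e₂) (hm : m ≠ 0) :
    ∫ r in Ioi 0, coeffDen m z₁ dz₁ z₂ dz₂ r ≤ (1 + m) ^ 2 := by
  have hsum : ∫ r in Ioi 0, coeffDen m z₁ dz₁ z₂ dz₂ r =
      normX z₁ dz₁ ^ 2 + normX z₂ dz₂ ^ 2 + 2 * m := by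
    rw [← F₁.integral_pairDen_eq F₂, ← integral_profSpeed_sq_mul hm]
    exact integral_add (F₁.integrableOn_pairDen F₂) (integrableOn_profSpeed_sq_mul hm)
  have hn₁ : 0 ≤ normX z₁ dz₁ := normX_nonneg
  have hn₂ : 0 ≤ normX z₂ dz₂ := normX_nonneg
  rw [hsum]
  nlinarith [F₁.normX_le, F₂.normX_le]

lemma sqrt_integral_coeffDen_le (F₁ : IsTransportedFrame m z₁ dz₁ dv₁ e₁)
    (F₂ : IsTransportedFrame m z₂ dz₂ dv₂ e₂) (hm : m ≠ 0) :
    √(∫ r in Ioi 0, coeffDen m z₁ dz₁ z₂ dz₂ r) ≤ 1 + m :=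
  (Real.sqrt_le_left (by positivity)).2 (F₁.integral_coeffDen_le F₂ hm)

lemma norm_planeComp_sub_le_of_forall_le (F₁ : IsTransportedFrame m z₁ dz₁ dv₁ e₁)
    (F₂ : IsTransportedFrame m z₂ dz₂ dv₂ e₂) (hm : m ≠ 0) (h₁ : normX z₁ dz₁ ≤ ε)
    (h₂ : normX z₂ dz₂ ≤ ε)
    (hK : ∀ r, 0 < r → ‖planeComp m r (e₁ r) - planeComp m r (e₂ r)‖ ≤ K) (hr : 0 < r) :
    ‖planeComp m r (e₁ r) - planeComp m r (e₂ r)‖ ≤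
      19 * ((1 + m) * normX (z₁ - z₂) (dz₁ - dz₂)) + 6 * K * ((1 + m) * (2 * ε)) := by
  have hK0 : 0 ≤ K := (norm_nonneg _).trans (hK r hr)
  have hX0 : 0 ≤ᵐ[volume.restrict (Ioi 0)] xDen (z₁ - z₂) (dz₁ - dz₂) := ae_xDen_nonneg
  have hU0 : 0 ≤ᵐ[volume.restrict (Ioi 0)] pairDen z₁ dz₁ z₂ dz₂ :=
    (ae_restrict_mem measurableSet_Ioi).mono fun r hr => pairDen_nonneg hr
  have hT0 : 0 ≤ᵐ[volume.restrict (Ioi 0)] coeffDen m z₁ dz₁ z₂ dz₂ :=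
    (ae_restrict_mem measurableSet_Ioi).mono fun r hr =>
      (pairDen_nonneg hr).trans (pairDen_le_coeffDen hr)
  have iT := F₁.integrableOn_coeffDen F₂ hm
  have iTX := (integrable_sqrt_mul_sqrt iT (F₁.integrableOn_xDen_sub F₂) hT0 hX0).const_mul 19
  have iTU := (integrable_sqrt_mul_sqrt iT (F₁.integrableOn_pairDen F₂) hT0 hU0).const_mul (6 * K)
  have hbd := (F₁.isLocPrimitive_planeComp.sub F₂.isLocPrimitive_planeComp).norm_sub_le_of_tendsto
    (F₁.tendsto_planeComp.sub F₂.tendsto_planeComp) hr (iTX.add iTU) <| by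
      filter_upwards [F₁.ae_planeComp_deriv, F₂.ae_planeComp_deriv,
        ae_restrict_mem measurableSet_Ioi] with r hd₁ hd₂ hr
      rw [hd₁, hd₂]
      exact F₁.norm_planeTransport_sub_le F₂ hr (hK r hr)
  have hT := F₁.sqrt_integral_coeffDen_le F₂ hm
  rw [sub_self, sub_zero] at hbd
  refine hbd.trans ((integral_add iTX iTU).trans_le ?_)
  rw [integral_const_mul, integral_const_mul]
  gcongr
  · exact (integral_sqrt_mul_sqrt_le iT (F₁.integrableOn_xDen_sub F₂) hT0 hX0).trans
      (mul_le_mul_of_nonneg_right hT (Real.sqrt_nonneg _))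
  · exact (integral_sqrt_mul_sqrt_le iT (F₁.integrableOn_pairDen F₂) hT0 hU0).trans
      (mul_le_mul hT (F₁.sqrt_integral_pairDen_le F₂ h₁ h₂) (Real.sqrt_nonneg _) (by positivity))

lemma norm_planeComp_sub_le (F₁ : IsTransportedFrame m z₁ dz₁ dv₁ e₁)
    (F₂ : IsTransportedFrame m z₂ dz₂ dv₂ e₂) (hm : m ≠ 0)
    (h₁ : normX z₁ dz₁ ≤ 1 / (24 * (1 + m))) (h₂ : normX z₂ dz₂ ≤ 1 / (24 * (1 + m)))
    (hr : 0 < r) : ‖planeComp m r (e₁ r) - planeComp m r (e₂ r)‖ ≤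
      38 * (1 + m) * normX (z₁ - z₂) (dz₁ - dz₂) := by
  let f (r : Ioi (0 : ℝ)) := ‖planeComp m r (e₁ r) - planeComp m r (e₂ r)‖
  have hf : BddAbove (range f) := ⟨2, forall_mem_range.2 fun r => by
    have := norm_sub_le_of_le (F₁.norm_planeComp_le_one r.2) (F₂.norm_planeComp_le_one r.2)
    linarith⟩
  have hself (K : ℝ) (hK : ∀ r, f r ≤ K) (r : Ioi (0 : ℝ)) :
      f r ≤ K / 2 + 19 * ((1 + m) * normX (z₁ - z₂) (dz₁ - dz₂)) := by
    refine (F₁.norm_planeComp_sub_le_of_forall_le F₂ hm h₁ h₂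
      (fun r hr => hK ⟨r, hr⟩) r.2).trans_eq ?_
    field_simp
    ring
  refine (le_two_mul_of_forall_le_half_add hf hself ⟨r, hr⟩).trans_eq ?_
  ring

lemma sqrt_nsq3_sub_le (F₁ : IsTransportedFrame m z₁ dz₁ dv₁ e₁)
    (F₂ : IsTransportedFrame m z₂ dz₂ dv₂ e₂) (hm : m ≠ 0)
    (h₁ : normX z₁ dz₁ ≤ 1 / (24 * (1 + m))) (h₂ : normX z₂ dz₂ ≤ 1 / (24 * (1 + m)))
    (hr : 0 < r) :
    √(nsq3 fun i => e₁ r i - e₂ r i) ≤ 80 * (1 + m) * normX (z₁ - z₂) (dz₁ - dz₂) := by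
  have hN : 0 ≤ normX (z₁ - z₂) (dz₁ - dz₂) := normX_nonneg
  have hδ := (F₁.isLocPrimitive_z.sub F₂.isLocPrimitive_z).norm_le_normX
    (F₁.integrableOn_xDen_sub F₂) hr
  have hζ := F₁.norm_planeComp_sub_le F₂ hm h₁ h₂ hr
  have hq := (pairBound_tangentHeight ⟨F₁.norm_z_le hr, F₂.norm_z_le hr, hδ⟩ le_rfl
    ⟨F₁.norm_planeComp_le_one hr, F₂.norm_planeComp_le_one hr, hζ⟩).norm_sub_le
  rw [← F₁.profComp_eq hr, ← F₂.profComp_eq hr, ← profComp_sub, Real.norm_eq_abs] at hq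
  rw [← planeComp_sub] at hζ
  refine (sqrt_nsq3_le (m := m) hr).trans ((add_le_add hζ hq).trans ?_)
  have : 0 ≤ m * normX (z₁ - z₂) (dz₁ - dz₂) := by positivity
  change _ + (_ * normX (z₁ - z₂) (dz₁ - dz₂) + _) ≤ _
  linarith

end IsTransportedFrame

end DifferenceEstimates

section MapDifference

variable {m : ℕ} {z₁ dz₁ z₂ dz₂ : ℝ → ℂ} {dv₁ e₁ dv₂ e₂ : ℝ → V3} {r : ℝ}

lemma xDenV_nonneg {v dv : ℝ → V3} (hr : 0 < r) : 0 ≤ xDenV v dv r := by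
  simp only [xDenV, nsq3]
  positivity

lemma aestronglyMeasurable_xDenV {v dv : ℝ → V3}
    (h : ∀ i, IsLocPrimitive (fun r => v r i) fun r => dv r i) :
    AEStronglyMeasurable (xDenV v dv) (volume.restrict (Ioi 0)) := by
  have hv (i : Fin 3) : AEMeasurable (fun r => v r i) (volume.restrict (Ioi 0)) :=
    (h i).continuousOn.aemeasurable measurableSet_Ioi
  have hdv (i : Fin 3) := (h i).aestronglyMeasurable.aemeasurable
  refine AEMeasurable.aestronglyMeasurable ?_
  unfold xDenV nsq3
  exact (((((hdv 0).pow_const 2).add ((hdv 1).pow_const 2)).add ((hdv 2).pow_const 2)).add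
    (((((hv 0).pow_const 2).add ((hv 1).pow_const 2)).add ((hv 2).pow_const 2)).div
      (aemeasurable_id.pow_const 2))).mul aemeasurable_id

namespace IsTransportedFrame

lemma nsq3_vOf_sub_le (F₁ : IsTransportedFrame m z₁ dz₁ dv₁ e₁)
    (F₂ : IsTransportedFrame m z₂ dz₂ dv₂ e₂) (hr : 0 < r) :
    nsq3 (fun i => vOf m z₁ r i - vOf m z₂ r i) ≤ 2 * ‖z₁ r - z₂ r‖ ^ 2 := by
  have hγ := (pairBound_sphereHeight ⟨F₁.norm_z_le hr, F₂.norm_z_le hr, le_rfl⟩).norm_sub_le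
  have hsq := pow_le_pow_left₀ (norm_nonneg _) hγ 2
  rw [Real.norm_eq_abs, sq_abs] at hsq
  rw [nsq3_eq_sq_norm_planeComp_add (m := m) hr, planeComp_sub, profComp_sub, planeComp_vOf hr,
    planeComp_vOf hr, profComp_vOf hr, profComp_vOf hr]
  linarith

lemma ae_nsq3_deriv_vOf_sub_le (F₁ : IsTransportedFrame m z₁ dz₁ dv₁ e₁)
    (F₂ : IsTransportedFrame m z₂ dz₂ dv₂ e₂) :
    ∀ᵐ r ∂volume.restrict (Ioi 0), nsq3 (fun i => dv₁ r i - dv₂ r i) ≤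
      4 * ‖dz₁ r - dz₂ r‖ ^ 2 + 164 * (coeffDen m z₁ dz₁ z₂ dz₂ r / r) * ‖z₁ r - z₂ r‖ ^ 2 := by
  filter_upwards [F₁.ae_planeComp_deriv_vOf, F₂.ae_planeComp_deriv_vOf, F₁.ae_profComp_deriv_vOf,
    F₂.ae_profComp_deriv_vOf, ae_restrict_mem measurableSet_Ioi] with r hV₁ hV₂ hp₁ hp₂ hr
  have hκ0 : 0 ≤ profSpeed m r := profSpeed_nonneg hr
  have hκ : profSpeed m r ≤ √(coeffDen m z₁ dz₁ z₂ dz₂ r / r) := profSpeed_le hr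
  have hz : PairBound (z₁ r) (z₂ r) (1 / 2) ‖z₁ r - z₂ r‖ :=
    ⟨F₁.norm_z_le hr, F₂.norm_z_le hr, le_rfl⟩
  have hdz := pairBound_deriv (m := m) (z₁ := z₁) (z₂ := z₂) hr (le_refl ‖dz₁ r - dz₂ r‖)
  have hV := (pairBound_planeVel hκ0 hκ hz hdz).norm_sub_le
  have hp := (pairBound_tangentHeight_planeVel hκ0 hκ le_rfl hz hdz).norm_sub_le
  rw [← hV₁, ← hV₂, ← planeComp_sub] at hV
  rw [← hp₁, ← hp₂, ← profComp_sub] at hp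
  have hp_sq := pow_le_pow_left₀ (norm_nonneg _) hp 2
  rw [Real.norm_eq_abs, sq_abs] at hp_sq
  have hT : 0 ≤ coeffDen m z₁ dz₁ z₂ dz₂ r / r :=
    div_nonneg ((pairDen_nonneg hr).trans (pairDen_le_coeffDen hr)) (le_of_lt hr)
  rw [nsq3_eq_sq_norm_planeComp_add (m := m) hr, ← Real.sq_sqrt hT]
  set W := √(coeffDen m z₁ dz₁ z₂ dz₂ r / r)
  set η := ‖dz₁ r - dz₂ r‖
  set δ := ‖z₁ r - z₂ r‖
  calc _ ≤ (η + W * δ) ^ 2 + (9 * W * δ + η) ^ 2 := by gcongr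
    _ ≤ 2 * (η ^ 2 + (W * δ) ^ 2) + 2 * ((9 * W * δ) ^ 2 + η ^ 2) := add_le_add add_sq_le add_sq_le
    _ = _ := by ring

lemma ae_xDenV_vOf_sub_le (F₁ : IsTransportedFrame m z₁ dz₁ dv₁ e₁)
    (F₂ : IsTransportedFrame m z₂ dz₂ dv₂ e₂) :
    ∀ᵐ r ∂volume.restrict (Ioi 0),
      xDenV (fun r i => vOf m z₁ r i - vOf m z₂ r i) (fun r i => dv₁ r i - dv₂ r i) r ≤
        4 * xDen (z₁ - z₂) (dz₁ - dz₂) r +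
          164 * normX (z₁ - z₂) (dz₁ - dz₂) ^ 2 * coeffDen m z₁ dz₁ z₂ dz₂ r := by
  filter_upwards [F₁.ae_nsq3_deriv_vOf_sub_le F₂, ae_restrict_mem measurableSet_Ioi] with r hd hr
  have hv := F₁.nsq3_vOf_sub_le F₂ hr
  have hδ : ‖z₁ r - z₂ r‖ ≤ normX (z₁ - z₂) (dz₁ - dz₂) :=
    (F₁.isLocPrimitive_z.sub F₂.isLocPrimitive_z).norm_le_normX (F₁.integrableOn_xDen_sub F₂) hr
  have hT : 0 ≤ coeffDen m z₁ dz₁ z₂ dz₂ r := (pairDen_nonneg hr).trans (pairDen_le_coeffDen hr)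
  have hr0 : 0 < r := hr
  calc _ ≤ (4 * ‖dz₁ r - dz₂ r‖ ^ 2
          + 164 * (coeffDen m z₁ dz₁ z₂ dz₂ r / r) * ‖z₁ r - z₂ r‖ ^ 2
          + 4 * ‖z₁ r - z₂ r‖ ^ 2 / r ^ 2) * r := by
        unfold xDenV
        gcongr
        exact hv.trans (by gcongr; norm_num)
    _ = 4 * xDen (z₁ - z₂) (dz₁ - dz₂) r
          + 164 * ‖z₁ r - z₂ r‖ ^ 2 * coeffDen m z₁ dz₁ z₂ dz₂ r := by
        simp only [xDen, Pi.sub_apply]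
        field_simp
        ring
    _ ≤ _ := by gcongr

lemma integrableOn_xDenV_vOf_sub (F₁ : IsTransportedFrame m z₁ dz₁ dv₁ e₁)
    (F₂ : IsTransportedFrame m z₂ dz₂ dv₂ e₂) (hm : m ≠ 0) :
    IntegrableOn (xDenV (fun r i => vOf m z₁ r i - vOf m z₂ r i) (fun r i => dv₁ r i - dv₂ r i))
      (Ioi 0) := by
  have iX := (F₁.integrableOn_xDen_sub F₂).const_mul 4
  have iT := (F₁.integrableOn_coeffDen F₂ hm).const_mul (164 * normX (z₁ - z₂) (dz₁ - dz₂) ^ 2)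
  refine (iX.add iT).mono'
    (aestronglyMeasurable_xDenV fun i => (F₁.locAC_vOf.isLocPrimitive i).sub
      (F₂.locAC_vOf.isLocPrimitive i)) ?_
  filter_upwards [F₁.ae_xDenV_vOf_sub_le F₂, ae_restrict_mem measurableSet_Ioi] with r h hr
  exact (Real.norm_of_nonneg (xDenV_nonneg hr)).trans_le h

lemma sqrt_integral_xDenV_vOf_sub_le (F₁ : IsTransportedFrame m z₁ dz₁ dv₁ e₁)
    (F₂ : IsTransportedFrame m z₂ dz₂ dv₂ e₂) (hm : m ≠ 0) :
    √(∫ r in Ioi 0, xDenV (fun r i => vOf m z₁ r i - vOf m z₂ r i)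
        (fun r i => dv₁ r i - dv₂ r i) r) ≤
      13 * (1 + m) * normX (z₁ - z₂) (dz₁ - dz₂) := by
  have hN : 0 ≤ normX (z₁ - z₂) (dz₁ - dz₂) := normX_nonneg
  have iX := (F₁.integrableOn_xDen_sub F₂).const_mul 4
  have iT := (F₁.integrableOn_coeffDen F₂ hm).const_mul (164 * normX (z₁ - z₂) (dz₁ - dz₂) ^ 2)
  have hle := integral_mono_ae (F₁.integrableOn_xDenV_vOf_sub F₂ hm) (iX.add iT)
    (F₁.ae_xDenV_vOf_sub_le F₂)
  refine Real.sqrt_le_iff.2 ⟨by positivity, hle.trans ?_⟩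
  simp only [Pi.add_apply]
  rw [integral_add iX iT, integral_const_mul, integral_const_mul, integral_xDen_eq]
  calc _ ≤ 4 * normX (z₁ - z₂) (dz₁ - dz₂) ^ 2
          + 164 * normX (z₁ - z₂) (dz₁ - dz₂) ^ 2 * (1 + m) ^ 2 := by
        gcongr
        exact F₁.integral_coeffDen_le F₂ hm
    _ ≤ _ := by
        have : 0 ≤ normX (z₁ - z₂) (dz₁ - dz₂) ^ 2 * (2 * m + m ^ 2) := by positivity
        linarith [sq_nonneg (normX (z₁ - z₂) (dz₁ - dz₂))]

end IsTransportedFrame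

end MapDifference

/-- **Difference estimates for the maps and the gauge frames (Lemma on δe).**
For m ≥ 1 there are ε, C > 0 such that: if ‖z_l‖_X ≤ ε (l = a,b), v_l is the map
determined by z_l, and e_l solves e_l′ = −(v_l′·e_l) v_l, e_l(0) = ĵ, then
‖v_a − v_b‖_X + ‖e_a − e_b‖_{L^∞} ≤ C ‖z_a − z_b‖_X. -/
theorem statement17 (m : ℕ) (hm : 1 ≤ m) :
    ∃ ε > (0:ℝ), ∃ C > (0:ℝ),
      ∀ (za dza zb dzb : ℝ → ℂ),
      LocACC za dza → LocACC zb dzb →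
      IntegrableOn (xDen za dza) (Ioi (0:ℝ)) → normX za dza ≤ ε →
      IntegrableOn (xDen zb dzb) (Ioi (0:ℝ)) → normX zb dzb ≤ ε →
      ∀ (dva dvb : ℝ → V3),
      LocAC (vOf m za) dva → LocAC (vOf m zb) dvb →
      ∀ (ea eb : ℝ → V3),
      -- e_a solves the transport ODE with e_a(0) = ĵ
      (∀ i, ea 0 i = jHat i) →
      (∀ r : ℝ, 0 ≤ r → ∀ i,
        IntegrableOn (fun τ => dot3 (dva τ) (ea τ) * vOf m za τ i) (Icc 0 r)) →
      (∀ r : ℝ, 0 ≤ r → ∀ i,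
        ea r i = jHat i - ∫ τ in (0:ℝ)..r, dot3 (dva τ) (ea τ) * vOf m za τ i) →
      -- e_b solves the transport ODE with e_b(0) = ĵ
      (∀ i, eb 0 i = jHat i) →
      (∀ r : ℝ, 0 ≤ r → ∀ i,
        IntegrableOn (fun τ => dot3 (dvb τ) (eb τ) * vOf m zb τ i) (Icc 0 r)) →
      (∀ r : ℝ, 0 ≤ r → ∀ i,
        eb r i = jHat i - ∫ τ in (0:ℝ)..r, dot3 (dvb τ) (eb τ) * vOf m zb τ i) →
      -- conclusion: ‖δv‖_X + ‖δe‖_{L^∞} ≲ ‖δz‖_X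
      IntegrableOn
        (xDenV (fun r i => vOf m za r i - vOf m zb r i) (fun r i => dva r i - dvb r i))
        (Ioi (0:ℝ)) ∧
      ∀ r : ℝ, 0 ≤ r →
        Real.sqrt (∫ ρ in Ioi (0:ℝ),
            xDenV (fun ρ i => vOf m za ρ i - vOf m zb ρ i)
              (fun ρ i => dva ρ i - dvb ρ i) ρ)
          + Real.sqrt (nsq3 (fun i => ea r i - eb r i))
        ≤ C * normX (fun ρ => za ρ - zb ρ) (fun ρ => dza ρ - dzb ρ) := by
  have hm0 : m ≠ 0 := Nat.one_le_iff_ne_zero.1 hm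
  have hε : 1 / (24 * (1 + m : ℝ)) ≤ 1 / 2 := by
    gcongr
    linarith [m.cast_nonneg (α := ℝ)]
  refine ⟨1 / (24 * (1 + m)), by positivity, 93 * (1 + m), by positivity, ?_⟩
  intro za dza zb dzb hza hzb iza na izb nb dva dvb hva hvb ea eb ea0 iea hea eb0 ieb heb
  have Fa : IsTransportedFrame m za dza dva ea := ⟨hza, iza, na.trans hε, hva, iea, hea⟩
  have Fb : IsTransportedFrame m zb dzb dvb eb := ⟨hzb, izb, nb.trans hε, hvb, ieb, heb⟩
  refine ⟨Fa.integrableOn_xDenV_vOf_sub Fb hm0, fun r hr => ?_⟩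
  have hv := Fa.sqrt_integral_xDenV_vOf_sub_le Fb hm0
  have he : √(nsq3 fun i => ea r i - eb r i) ≤
      80 * (1 + m) * normX (za - zb) (dza - dzb) := by
    rcases hr.eq_or_lt with rfl | hr
    · simpa [nsq3, ea0, eb0] using mul_nonneg (by positivity) normX_nonneg
    · exact Fa.sqrt_nsq3_sub_le Fb hm0 na nb hr
  exact (add_le_add hv he).trans_eq (by change _ = 93 * (1 + m) * normX (za - zb) (dza - dzb); ring)

end
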